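/- arXiv:1609.02490 — 3 statements merged into one kernel-verified Lean document; each statement's English description precedes it below -/
import Mathlib

section
/- Let p ∈ (0,1) be fixed. For each n, let d(n) ∈ ℕ and α = α(n) ∈ ℝ^{d(n)} be a vector of nonnegative entries. If (‖α‖₂/‖α‖₄)⁴ / n³ → ∞ as n → ∞, then the total variation distance between the distribution of the Erdős–Rényi random graph G(n,p) and the distribution of the anisotropic random geometric graph G(n,p,α) converges to 0. -/
open MeasureTheory ProbabilityTheory Real Filter
open scoped Classical ENNReal NNReal

noncomputable section

/-- Euclidean inner product on `Fin d → ℝ`. -/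
def dotp {d : ℕ} (x y : Fin d → ℝ) : ℝ := ∑ i, x i * y i

/-- The `q`-norm of a vector `α ∈ ℝ^d`. -/
def nrm {d : ℕ} (q : ℕ) (α : Fin d → ℝ) : ℝ := (∑ i, α i ^ q) ^ ((1 : ℝ) / q)

/-- The centered Gaussian measure `N(0, D_α)` on `ℝ^d`, `D_α = diag α`. -/
def gaussPi (d : ℕ) (α : Fin d → ℝ) : Measure (Fin d → ℝ) :=
  Measure.pi fun i => gaussianReal 0 (Real.toNNReal (α i))

/-- The law of `n` i.i.d. samples from `N(0, D_α)`. -/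
def sampleMeasure (n d : ℕ) (α : Fin d → ℝ) : Measure (Fin n → Fin d → ℝ) :=
  Measure.pi fun _ => gaussPi d α

/-- `t` is the `p`-th upper quantile of `⟨X₁, X₂⟩` for `X₁, X₂` i.i.d. `N(0, D_α)`. -/
def IsThreshold (d : ℕ) (α : Fin d → ℝ) (p t : ℝ) : Prop :=
  ((gaussPi d α).prod (gaussPi d α)) {xy | t ≤ dotp xy.1 xy.2} = ENNReal.ofReal p

instance (n : ℕ) : MeasurableSpace (SimpleGraph (Fin n)) := ⊤

/-- The anisotropic random geometric graph `G(n, p, α)`, with threshold `t = t_{p,α}`. -/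
def geomGraph (n d : ℕ) (α : Fin d → ℝ) (t : ℝ) : Measure (SimpleGraph (Fin n)) :=
  Measure.map (fun X => SimpleGraph.fromRel fun i j => t ≤ dotp (X i) (X j))
    (sampleMeasure n d α)

/-- The Erdős–Rényi random graph `G(n, p)`. -/
def erGraph (n : ℕ) (p : ℝ) : Measure (SimpleGraph (Fin n)) :=
  Measure.map (fun x => SimpleGraph.fromRel fun i j => x s(i, j) ≤ p)
    (Measure.pi fun _ : Sym2 (Fin n) => volume.restrict (Set.Icc (0 : ℝ) 1))

/-- Total variation distance between two measures. -/
def tvDist {Ω : Type*} [MeasurableSpace Ω] (μ ν : Measure Ω) : ℝ :=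
  ⨆ s : {s : Set Ω // MeasurableSet s}, |(μ s.1).toReal - (ν s.1).toReal|

/-!
Reveal the samples one at a time. Given the first `k` samples, the normalized inner products of the
next one with them form a centered Gaussian vector whose covariance is a weighted Gram matrix `S` of
the earlier samples. As long as `S` is close to the identity, the relative entropy of this vector
with respect to a standard Gaussian vector is at most the squared Frobenius norm of `S - 1`, whose
mean is of order `k² (‖α‖₄ / ‖α‖₂)⁴` by a variance computation. To stay on the event where `S` is
close to the identity, each sample carries auxiliary independent Gaussian coordinates, which replace
its row of inner products once that event has failed; the event is monotone in `k` and Markov's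
inequality bounds the cost of the replacement. The chain rule for the relative entropy and Pinsker's
inequality then compare `G(n, p, α)` with a graph having independent edges, the error being a
function of `n³ (‖α‖₄ / ‖α‖₂)⁴`. The edge probability of that graph is not exactly `p`, but the same
comparison on two vertices shows that it is so close to `p` that the change to `G(n, p)` is
negligible.
-/

section TotalVariation

variable {Ω Ω' : Type*} [MeasurableSpace Ω] [MeasurableSpace Ω']

lemma abs_measureReal_sub_le_one (μ ν : Measure Ω) [IsProbabilityMeasure μ]
    [IsProbabilityMeasure ν] (s : Set Ω) : |μ.real s - ν.real s| ≤ 1 :=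
  abs_sub_le_of_nonneg_of_le measureReal_nonneg measureReal_le_one measureReal_nonneg
    measureReal_le_one

lemma abs_measureReal_sub_le_tvDist (μ ν : Measure Ω) [IsProbabilityMeasure μ]
    [IsProbabilityMeasure ν] {s : Set Ω} (hs : MeasurableSet s) :
    |μ.real s - ν.real s| ≤ tvDist μ ν :=
  le_ciSup (f := fun s : {s : Set Ω // MeasurableSet s} => |μ.real s.1 - ν.real s.1|)
    ⟨1, by rintro _ ⟨s, rfl⟩; exact abs_measureReal_sub_le_one μ ν s.1⟩ ⟨s, hs⟩

lemma tvDist_le {μ ν : Measure Ω} {c : ℝ}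
    (h : ∀ s, MeasurableSet s → |μ.real s - ν.real s| ≤ c) : tvDist μ ν ≤ c :=
  haveI : Nonempty {s : Set Ω // MeasurableSet s} := ⟨⟨∅, .empty⟩⟩
  ciSup_le fun s => h s.1 s.2

lemma tvDist_nonneg (μ ν : Measure Ω) : 0 ≤ tvDist μ ν :=
  Real.iSup_nonneg fun _ => abs_nonneg _

lemma tvDist_comm (μ ν : Measure Ω) : tvDist μ ν = tvDist ν μ := by
  simp only [tvDist, abs_sub_comm]

lemma tvDist_triangle (μ ν ρ : Measure Ω) [IsProbabilityMeasure μ] [IsProbabilityMeasure ν]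
    [IsProbabilityMeasure ρ] : tvDist μ ρ ≤ tvDist μ ν + tvDist ν ρ :=
  tvDist_le fun _ hs => (abs_sub_le _ _ _).trans <|
    add_le_add (abs_measureReal_sub_le_tvDist μ ν hs) (abs_measureReal_sub_le_tvDist ν ρ hs)

lemma tvDist_map_le (μ ν : Measure Ω) [IsProbabilityMeasure μ] [IsProbabilityMeasure ν]
    {f : Ω → Ω'} (hf : Measurable f) : tvDist (μ.map f) (ν.map f) ≤ tvDist μ ν :=
  tvDist_le fun s hs => by
    rw [map_measureReal_apply hf hs, map_measureReal_apply hf hs]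
    exact abs_measureReal_sub_le_tvDist μ ν (hf hs)

lemma tvDist_map_map_le (μ : Measure Ω) [IsProbabilityMeasure μ] {f g : Ω → Ω'}
    (hf : Measurable f) (hg : Measurable g) {s : Set Ω} (h : ∀ ω ∉ s, f ω = g ω) :
    tvDist (μ.map f) (μ.map g) ≤ μ.real s := by
  have key : ∀ {f g : Ω → Ω'}, Measurable f → Measurable g → (∀ ω ∉ s, f ω = g ω) →
      ∀ t, MeasurableSet t → (μ.map f).real t ≤ μ.real s + (μ.map g).real t := by
    intro f g hf hg h t ht
    rw [map_measureReal_apply hf ht, map_measureReal_apply hg ht]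
    refine (measureReal_mono fun ω hω => ?_).trans (measureReal_union_le s (g ⁻¹' t))
    by_cases hs : ω ∈ s
    · exact .inl hs
    · exact .inr (by simpa [← h ω hs] using hω)
  refine tvDist_le fun t ht => abs_sub_le_iff.2 ⟨?_, ?_⟩
  · linarith [key hf hg h t ht]
  · linarith [key hg hf (fun ω hω => (h ω hω).symm) t ht]

end TotalVariation

section Pinsker

open InformationTheory

variable {Ω : Type*} [MeasurableSpace Ω]

lemma sq_sqrt_sub_one_le_klFun {x : ℝ} (hx : 0 ≤ x) :
    (√x - 1) ^ 2 ≤ klFun x := by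
  obtain rfl | hx := hx.eq_or_lt
  · simp [klFun_apply]
  have hlog : 1 - (√x)⁻¹ ≤ log x / 2 := by
    rw [← Real.log_sqrt hx.le]; exact one_sub_inv_le_log_of_pos (sqrt_pos.2 hx)
  have hmul : x * (√x)⁻¹ = √x := by
    rw [← div_eq_mul_inv, Real.div_sqrt]
  rw [klFun_apply]
  nlinarith [Real.sq_sqrt hx.le, mul_le_mul_of_nonneg_left hlog hx.le]

lemma klDiv_restrict_le (μ ν : Measure Ω) [IsFiniteMeasure μ] [IsFiniteMeasure ν]
    {s : Set Ω} (hs : MeasurableSet s) :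
    klDiv (μ.restrict s) (ν.restrict s) ≤ klDiv μ ν := by
  by_cases hac : μ ≪ ν
  swap
  · rw [klDiv_of_not_ac hac]; exact le_top
  have hdens : μ.restrict s = (ν.restrict s).withDensity (μ.rnDeriv ν) := by
    rw [← restrict_withDensity hs, Measure.withDensity_rnDeriv_eq μ ν hac]
  have hderiv : (μ.restrict s).rnDeriv (ν.restrict s) =ᵐ[ν.restrict s] μ.rnDeriv ν := by
    rw [hdens]; exact Measure.rnDeriv_withDensity _ (μ.measurable_rnDeriv ν)
  rw [klDiv_eq_lintegral_klFun_of_ac (hac.restrict s),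
    klDiv_eq_lintegral_klFun_of_ac hac]
  refine (lintegral_congr_ae ?_).trans_le (setLIntegral_le_lintegral s _)
  filter_upwards [hderiv] with x hx using by rw [hx]

lemma mul_klFun_measureReal_div_le_toReal_klDiv (μ ν : Measure Ω) [IsFiniteMeasure μ]
    [IsFiniteMeasure ν] (h : klDiv μ ν ≠ ∞) {s : Set Ω}
    (hs : MeasurableSet s) :
    ν.real s * klFun (μ.real s / ν.real s)
      ≤ (klDiv μ ν).toReal := by
  have hle := klDiv_restrict_le μ ν hs
  obtain ⟨hac, hint⟩ := klDiv_ne_top_iff.1 (ne_top_of_le_ne_top h hle)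
  simpa only [measureReal_restrict_apply_univ] using
    (mul_klFun_le_toReal_klDiv hac hint).trans (ENNReal.toReal_mono h hle)

/- Pinsker's inequality; going through the Hellinger distance costs the constant `2` in place of
the optimal `1 / √2`. -/
lemma tvDist_le_sqrt_klDiv (μ ν : Measure Ω) [IsProbabilityMeasure μ] [IsProbabilityMeasure ν]
    (h : klDiv μ ν ≠ ∞) :
    tvDist μ ν ≤ 2 * √(klDiv μ ν).toReal := by
  have hac := (klDiv_ne_top_iff.1 h).1
  refine tvDist_le fun s hs => ?_
  set a := μ.real s
  set b := ν.real s
  have ha : 0 ≤ a := measureReal_nonneg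
  have hb : 0 ≤ b := measureReal_nonneg
  have hellinger : (√a - √b) ^ 2 ≤ (klDiv μ ν).toReal := by
    refine le_trans ?_ (mul_klFun_measureReal_div_le_toReal_klDiv μ ν h hs)
    obtain hb0 | hb0 := hb.eq_or_lt
    · have ha0 : a = 0 := by
        simpa [a, measureReal_eq_zero_iff] using
          hac ((measureReal_eq_zero_iff).1 hb0.symm)
      simp only [show ν.real s = 0 from hb0.symm, ha0, ← hb0]; simp
    · calc (√a - √b) ^ 2 = b * (√(a / b) - 1) ^ 2 := by
            rw [Real.sqrt_div ha]
            field_simp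
            rw [Real.sq_sqrt hb]; ring
        _ ≤ _ := by gcongr; exact sq_sqrt_sub_one_le_klFun (by positivity)
  have hsum : |√a + √b| ≤ 2 := by
    rw [abs_of_nonneg (by positivity)]
    linarith [Real.sqrt_le_one.2 (measureReal_le_one : a ≤ 1),
      Real.sqrt_le_one.2 (measureReal_le_one : b ≤ 1)]
  calc |a - b| = |√a + √b| * |√a - √b| := by
        rw [← abs_mul, ← sq_sub_sq, Real.sq_sqrt ha, Real.sq_sqrt hb]
    _ ≤ 2 * √(klDiv μ ν).toReal :=
        mul_le_mul hsum (Real.abs_le_sqrt hellinger) (abs_nonneg _) zero_le_two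

end Pinsker

section KullbackLeibler

open InformationTheory

variable {A B V : Type*} [MeasurableSpace A] [MeasurableSpace B] [MeasurableSpace V]

lemma klDiv_map_measurableEquiv (μ ν : Measure A) [IsFiniteMeasure μ] [IsFiniteMeasure ν]
    (e : A ≃ᵐ B) : klDiv (μ.map e) (ν.map e) = klDiv μ ν := by
  refine le_antisymm (klDiv_map_le μ ν e.measurable) ?_
  simpa using klDiv_map_le (μ.map e) (ν.map e) e.symm.measurable

lemma klDiv_withDensity (ν : Measure A) [IsFiniteMeasure ν] {f : A → ℝ≥0∞}
    [IsFiniteMeasure (ν.withDensity f)] (hf : Measurable f) :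
    klDiv (ν.withDensity f) ν = ∫⁻ x, ENNReal.ofReal (klFun (f x).toReal) ∂ν := by
  rw [klDiv_eq_lintegral_klFun_of_ac (withDensity_absolutelyContinuous ν f)]
  refine lintegral_congr_ae ?_
  filter_upwards [Measure.rnDeriv_withDensity ν hf] with x hx using by rw [hx]

lemma klDiv_compProd_right_eq_lintegral [MeasurableSpace.CountableOrCountablyGenerated A B]
    (μ : Measure A) [IsFiniteMeasure μ] (κ η : Kernel A B) [IsFiniteKernel κ]
    [IsFiniteKernel η] (h : ∀ᵐ a ∂μ, κ a ≪ η a) :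
    klDiv (μ ⊗ₘ κ) (μ ⊗ₘ η) = ∫⁻ a, klDiv (κ a) (η a) ∂μ := by
  have hmeas : Measurable fun p : A × B => κ.rnDeriv η p.1 p.2 := κ.measurable_rnDeriv η
  have hdens : μ ⊗ₘ κ = (μ ⊗ₘ η).withDensity fun p => κ.rnDeriv η p.1 p.2 := by
    have hker : κ =ᵐ[μ] η.withDensity (κ.rnDeriv η) := by
      filter_upwards [h] with a ha using (Kernel.withDensity_rnDeriv_eq ha).symm
    rw [Measure.compProd_congr hker, Measure.compProd_withDensity hmeas]
  have : IsFiniteMeasure ((μ ⊗ₘ η).withDensity fun p => κ.rnDeriv η p.1 p.2) :=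
    hdens ▸ inferInstance
  rw [hdens, klDiv_withDensity _ hmeas, Measure.lintegral_compProd (by fun_prop)]
  refine lintegral_congr_ae ?_
  filter_upwards [h] with a ha
  rw [klDiv_eq_lintegral_klFun_of_ac ha]
  refine lintegral_congr_ae ?_
  filter_upwards [Kernel.rnDeriv_eq_rnDeriv_measure (κ := κ) (η := η) (a := a)] with b hb
  rw [hb]

lemma klDiv_prod_eq_klDiv_fst_add [StandardBorelSpace V] [Nonempty V] (ρ : Measure (A × V))
    [IsProbabilityMeasure ρ] (ν : Measure A) [IsFiniteMeasure ν] (β : Measure V)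
    [IsProbabilityMeasure β] :
    klDiv ρ (ν.prod β) = klDiv ρ.fst ν + klDiv ρ (ρ.fst.prod β) := by
  have h := klDiv_compProd_eq_add ρ.fst ν ρ.condKernel (Kernel.const A β)
  simpa only [Measure.compProd_const, ρ.disintegrate] using h

/- Forgetting part of the conditioning variable can only decrease the conditional divergence. -/
lemma klDiv_map_prodMap_le [StandardBorelSpace V] [Nonempty V] (ρ : Measure (A × V))
    [IsProbabilityMeasure ρ] {g : A → B} (hg : Measurable g) (ν : Measure B)
    [IsFiniteMeasure ν] (β : Measure V) [IsProbabilityMeasure β] :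
    klDiv (ρ.map (Prod.map g id)) (ν.prod β)
      ≤ klDiv (ρ.fst.map g) ν + klDiv ρ (ρ.fst.prod β) := by
  have hgid : Measurable (Prod.map g (id : V → V)) := hg.prodMap measurable_id
  have : IsProbabilityMeasure (ρ.map (Prod.map g id)) :=
    Measure.isProbabilityMeasure_map hgid.aemeasurable
  have hfst : (ρ.map (Prod.map g id)).fst = ρ.fst.map g := by
    rw [Measure.fst, Measure.fst, Measure.map_map measurable_fst hgid,
      Measure.map_map hg measurable_fst]
    rfl
  have hprod : (ρ.fst.map g).prod β = (ρ.fst.prod β).map (Prod.map g id) := by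
    simpa using Measure.map_prod_map ρ.fst β hg measurable_id
  rw [klDiv_prod_eq_klDiv_fst_add, hfst, hprod]
  gcongr
  exact klDiv_map_le _ _ hgid

end KullbackLeibler

section Product

open InformationTheory

lemma klDiv_prod_prod {A B : Type*} [MeasurableSpace A] [MeasurableSpace B]
    (μ μ' : Measure A) (ν ν' : Measure B) [IsProbabilityMeasure μ]
    [IsProbabilityMeasure μ'] [IsProbabilityMeasure ν] [IsProbabilityMeasure ν'] :
    klDiv (μ.prod ν) (μ'.prod ν') = klDiv μ μ' + klDiv ν ν' := by
  have h := klDiv_compProd_eq_add μ μ' (Kernel.const A ν) (Kernel.const A ν')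
  have hswap := klDiv_compProd_left ν ν' (Kernel.const B μ)
  simp only [Measure.compProd_const] at h hswap
  rw [h, ← hswap, ← klDiv_map_measurableEquiv (μ.prod ν) _ .prodComm]
  simp only [MeasurableEquiv.prodComm, MeasurableEquiv.coe_mk, Equiv.coe_prodComm,
    Measure.prod_swap]

lemma klDiv_pi_fin {n : ℕ} {R : Fin n → Type*} [∀ i, MeasurableSpace (R i)]
    (μ ν : ∀ i, Measure (R i)) [∀ i, IsProbabilityMeasure (μ i)]
    [∀ i, IsProbabilityMeasure (ν i)] :
    klDiv (Measure.pi μ) (Measure.pi ν) = ∑ i, klDiv (μ i) (ν i) := by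
  induction n with
  | zero => rw [Subsingleton.elim μ ν]; simp
  | succ n ih =>
    rw [← klDiv_map_measurableEquiv _ _ (MeasurableEquiv.piFinSuccAbove R 0),
      (measurePreserving_piFinSuccAbove μ 0).map_eq,
      (measurePreserving_piFinSuccAbove ν 0).map_eq, klDiv_prod_prod, ih, Fin.sum_univ_succ]
    rfl

lemma klDiv_pi {ι : Type*} [Fintype ι] {R : ι → Type*} [∀ i, MeasurableSpace (R i)]
    (μ ν : ∀ i, Measure (R i)) [∀ i, IsProbabilityMeasure (μ i)]
    [∀ i, IsProbabilityMeasure (ν i)] :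
    klDiv (Measure.pi μ) (Measure.pi ν) = ∑ i, klDiv (μ i) (ν i) := by
  let e := (Fintype.equivFin ι).symm
  rw [← (measurePreserving_piCongrLeft μ e).map_eq, ← (measurePreserving_piCongrLeft ν e).map_eq,
    klDiv_map_measurableEquiv, klDiv_pi_fin]
  exact e.sum_comp fun i => klDiv (μ i) (ν i)

end Product

section SequentialOutput

open InformationTheory

variable {A E R : Type*}

/-- The outputs of a process driven by inputs `W 0, W 1, …`: the `j`-th output is computed by `f j`
from the inputs strictly before time `j` and the input at time `j`. -/
def sequentialOutput (f : ∀ k, (Fin k → E) → E → R) (n : ℕ) (W : Fin n → E) : Fin n → R :=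
  fun j => f j (fun i => W (Fin.castLE j.isLt.le i)) (W j)

lemma sequentialOutput_snoc (f : ∀ k, (Fin k → E) → E → R) (n : ℕ) (Z : Fin n → E) (w : E) :
    sequentialOutput f (n + 1) (Fin.snoc (α := fun _ => E) Z w)
      = Fin.snoc (α := fun _ => R) (sequentialOutput f n Z) (f n Z w) := by
  funext j
  induction j using Fin.lastCases with
  | last =>
    simp only [sequentialOutput, Fin.snoc_last]
    congr 1
    funext i
    exact Fin.snoc_castSucc (α := fun _ => E) w Z i
  | cast j =>
    simp only [sequentialOutput, Fin.snoc_castSucc]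
    congr 1
    funext i
    exact Fin.snoc_castSucc (α := fun _ => E) w Z (Fin.castLE j.isLt.le i)

variable [MeasurableSpace A] [MeasurableSpace E] [MeasurableSpace R]

lemma klDiv_map_prodMk_eq_lintegral [MeasurableSpace.CountableOrCountablyGenerated A R]
    (μ : Measure A) [IsProbabilityMeasure μ] (γ : Measure E) [IsProbabilityMeasure γ]
    (β : Measure R) [IsProbabilityMeasure β] {f : A → E → R}
    (hf : Measurable (Function.uncurry f)) (hac : ∀ a, γ.map (f a) ≪ β) :
    klDiv ((μ.prod γ).map fun p => (p.1, f p.1 p.2)) (μ.prod β)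
      = ∫⁻ a, klDiv (γ.map (f a)) β ∂μ := by
  let κ : Kernel A R := (Kernel.id ×ₖ Kernel.const A γ).map (Function.uncurry f)
  have hκ : ∀ a, κ a = γ.map (f a) := fun a => by
    rw [Kernel.map_apply _ hf, Kernel.prod_apply, Kernel.id_apply, Kernel.const_apply,
      Measure.dirac_prod, Measure.map_map hf (by fun_prop)]
    rfl
  have : IsMarkovKernel κ := Kernel.IsMarkovKernel.map _ hf
  have hpair : Measurable fun p : A × E => (p.1, f p.1 p.2) := measurable_fst.prodMk hf
  have hjoint : (μ.prod γ).map (fun p => (p.1, f p.1 p.2)) = μ ⊗ₘ κ := by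
    ext s hs
    rw [Measure.map_apply hpair hs, Measure.prod_apply (hpair hs), Measure.compProd_apply hs]
    refine lintegral_congr fun a => ?_
    rw [hκ, Measure.map_apply hf.of_uncurry_left (measurable_prodMk_left hs)]
    rfl
  rw [hjoint, ← Measure.compProd_const,
    klDiv_compProd_right_eq_lintegral μ κ (Kernel.const A β)
      (.of_forall fun a => by simpa only [hκ, Kernel.const_apply] using hac a)]
  simp only [hκ, Kernel.const_apply]

variable {f : ∀ k, (Fin k → E) → E → R}

lemma measurable_sequentialOutput (hf : ∀ k, Measurable (Function.uncurry (f k))) (n : ℕ) :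
    Measurable (sequentialOutput f n) :=
  measurable_pi_lambda _ fun j => (hf j).comp (by fun_prop :
    Measurable fun W : Fin n → E => (fun i : Fin j => W (Fin.castLE j.isLt.le i), W j))

lemma measurable_finSnoc (n : ℕ) :
    Measurable fun p : (Fin n → E) × E => (Fin.snoc p.1 p.2 : Fin (n + 1) → E) :=
  measurable_pi_lambda _ fun j => by
    induction j using Fin.lastCases with
    | last => simpa only [Fin.snoc_last] using measurable_snd
    | cast j => simp only [Fin.snoc_castSucc]; fun_prop

lemma map_finSnoc_prod_pi (γ : Measure E) [IsProbabilityMeasure γ] (n : ℕ) :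
    ((Measure.pi fun _ : Fin n => γ).prod γ).map
        (fun p => (Fin.snoc p.1 p.2 : Fin (n + 1) → E)) = Measure.pi fun _ => γ := by
  refine (Measure.pi_eq fun s hs => ?_).symm
  have hpre : (fun p : (Fin n → E) × E => (Fin.snoc p.1 p.2 : Fin (n + 1) → E)) ⁻¹' Set.univ.pi s
      = (Set.univ.pi fun i : Fin n => s i.castSucc) ×ˢ s (Fin.last n) := by
    ext p
    simp [Fin.forall_fin_succ']
  rw [Measure.map_apply (measurable_finSnoc n) (.univ_pi hs), hpre, Measure.prod_prod,
    Measure.pi_pi, Fin.prod_univ_castSucc]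

theorem klDiv_map_sequentialOutput_le [StandardBorelSpace R] [Nonempty R] (γ : Measure E)
    [IsProbabilityMeasure γ] (β : Measure R) [IsProbabilityMeasure β]
    (hf : ∀ k, Measurable (Function.uncurry (f k))) (hac : ∀ k Z, γ.map (f k Z) ≪ β) (n : ℕ) :
    klDiv ((Measure.pi fun _ => γ).map (sequentialOutput f n)) (Measure.pi fun _ => β)
      ≤ ∑ k ∈ Finset.range n, ∫⁻ Z, klDiv (γ.map (f k Z)) β ∂(Measure.pi fun _ => γ) := by
  induction n with
  | zero =>
    have hempty : (Measure.pi fun _ => γ).map (sequentialOutput f 0) = Measure.pi fun _ => β := by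
      rw [Measure.pi_of_empty, Measure.pi_of_empty,
        Measure.map_dirac' (measurable_sequentialOutput hf 0)]
      exact congrArg Measure.dirac (Subsingleton.elim _ _)
    simp [hempty]
  | succ n ih =>
    let μ := Measure.pi fun _ : Fin n => γ
    let ρ := (μ.prod γ).map fun p => (p.1, f n p.1 p.2)
    have hpair : Measurable fun p : (Fin n → E) × E => (p.1, f n p.1 p.2) :=
      measurable_fst.prodMk (hf n)
    have : IsProbabilityMeasure ρ := Measure.isProbabilityMeasure_map hpair.aemeasurable
    have hfst : ρ.fst = μ := by
      rw [Measure.fst, Measure.map_map measurable_fst hpair]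
      exact Measure.fst_prod
    have hout := measurable_sequentialOutput hf n
    have hlaw : (Measure.pi fun _ => γ).map (sequentialOutput f (n + 1))
        = (ρ.map (Prod.map (sequentialOutput f n) id)).map
          fun p => (Fin.snoc p.1 p.2 : Fin (n + 1) → R) := by
      rw [← map_finSnoc_prod_pi γ n, Measure.map_map (measurable_sequentialOutput hf _)
        (measurable_finSnoc n), Measure.map_map (hout.prodMap measurable_id) hpair,
        Measure.map_map (measurable_finSnoc n) ((hout.prodMap measurable_id).comp hpair)]
      congr 1
      funext p
      exact sequentialOutput_snoc f n p.1 p.2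
    have : IsProbabilityMeasure (ρ.map (Prod.map (sequentialOutput f n) id)) :=
      Measure.isProbabilityMeasure_map (hout.prodMap measurable_id).aemeasurable
    rw [hlaw, ← map_finSnoc_prod_pi β n, Finset.sum_range_succ,
      ← klDiv_map_prodMk_eq_lintegral μ γ β (hf n) (hac n)]
    refine (klDiv_map_le _ _ (measurable_finSnoc n)).trans
      ((klDiv_map_prodMap_le ρ hout _ β).trans ?_)
    rw [hfst]
    gcongr

end SequentialOutput

section GaussianKL

open InformationTheory
open scoped Matrix RealInnerProductSpace

lemma gaussianPDFReal_eq_mul (v : ℝ≥0) (hv : v ≠ 0) (x : ℝ) :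
    gaussianPDFReal 0 v x
      = gaussianPDFReal 0 1 x * exp ((1 - (v : ℝ)⁻¹) / 2 * x ^ 2 - log v / 2) := by
  have hv0 : (0 : ℝ) < v := by positivity
  have hsqrt : exp (-(log v / 2)) = (√(v : ℝ))⁻¹ := by
    rw [← Real.log_sqrt hv0.le, Real.exp_neg, Real.exp_log (by positivity)]
  rw [gaussianPDFReal, gaussianPDFReal, Real.sqrt_mul (by positivity) (v : ℝ), mul_inv, ← hsqrt,
    NNReal.coe_one, mul_one, mul_assoc, mul_assoc, ← exp_add, ← exp_add]
  congr 2
  field_simp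
  ring

lemma gaussianReal_eq_withDensity (v : ℝ≥0) (hv : v ≠ 0) :
    gaussianReal 0 v = (gaussianReal 0 1).withDensity
      fun x => ENNReal.ofReal (exp ((1 - (v : ℝ)⁻¹) / 2 * x ^ 2 - log v / 2)) := by
  rw [gaussianReal_of_var_ne_zero 0 hv, gaussianReal_of_var_ne_zero 0 one_ne_zero,
    ← withDensity_mul _ (measurable_gaussianPDF 0 1) (by fun_prop)]
  congr 1
  funext x
  rw [Pi.mul_apply, gaussianPDF, gaussianPDF, ← ENNReal.ofReal_mul (gaussianPDFReal_nonneg 0 1 x),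
    gaussianPDFReal_eq_mul v hv]

lemma integral_sq_gaussianReal (v : ℝ≥0) : ∫ x, x ^ 2 ∂(gaussianReal 0 v) = v := by
  have h := variance_id_gaussianReal (μ := 0) (v := v)
  rwa [variance_of_integral_eq_zero aemeasurable_id (by simp)] at h

lemma integrable_sq_gaussianReal (v : ℝ≥0) : Integrable (fun x => x ^ 2) (gaussianReal 0 v) :=
  (memLp_id_gaussianReal 2).integrable_sq

lemma klDiv_gaussianReal (v : ℝ≥0) (hv : v ≠ 0) :
    klDiv (gaussianReal 0 v) (gaussianReal 0 1) = ENNReal.ofReal ((v - 1 - log v) / 2) := by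
  have hac : gaussianReal 0 v ≪ gaussianReal 0 1 := by
    rw [gaussianReal_eq_withDensity v hv]; exact withDensity_absolutelyContinuous _ _
  have hllr : llr (gaussianReal 0 v) (gaussianReal 0 1)
      =ᵐ[gaussianReal 0 v] fun x => (1 - (v : ℝ)⁻¹) / 2 * x ^ 2 - log v / 2 := by
    refine hac.ae_le ?_
    nth_rw 1 [gaussianReal_eq_withDensity v hv]
    filter_upwards [Measure.rnDeriv_withDensity (gaussianReal 0 1)
      (f := fun x => ENNReal.ofReal (exp ((1 - (v : ℝ)⁻¹) / 2 * x ^ 2 - log v / 2)))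
      (by fun_prop)] with x hx
    rw [llr, hx, ENNReal.toReal_ofReal (exp_nonneg _), Real.log_exp]
  have hint : Integrable (fun x => (1 - (v : ℝ)⁻¹) / 2 * x ^ 2 - log v / 2) (gaussianReal 0 v) :=
    ((integrable_sq_gaussianReal v).const_mul _).sub (integrable_const _)
  rw [klDiv_of_ac_of_integrable hac (hint.congr hllr.symm), integral_congr_ae hllr,
    integral_sub ((integrable_sq_gaussianReal v).const_mul _) (integrable_const _),
    integral_const_mul, integral_sq_gaussianReal]
  have hv0 : (v : ℝ) ≠ 0 := by exact_mod_cast hv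
  simp only [integral_const, probReal_univ, smul_eq_mul]
  congr 1
  field_simp
  ring

lemma klDiv_gaussianReal_le (v : ℝ≥0) (hv : |(v : ℝ) - 1| ≤ 1 / 2) :
    klDiv (gaussianReal 0 v) (gaussianReal 0 1) ≤ ENNReal.ofReal (((v : ℝ) - 1) ^ 2) := by
  obtain ⟨hlo, -⟩ := abs_le.1 hv
  have hv0 : (1 / 2 : ℝ) ≤ v := by linarith
  have hlog : 1 - (v : ℝ)⁻¹ ≤ log v := one_sub_inv_le_log_of_pos (by linarith)
  have hinv : (v : ℝ)⁻¹ ≤ 2 := inv_le_of_inv_le₀ two_pos (by linarith)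
  rw [klDiv_gaussianReal v (by rintro rfl; norm_num at hv0)]
  refine ENNReal.ofReal_le_ofReal ?_
  calc ((v : ℝ) - 1 - log v) / 2 ≤ ((v : ℝ) - 1) ^ 2 * (v : ℝ)⁻¹ / 2 := by
        have : ((v : ℝ) - 1) ^ 2 * (v : ℝ)⁻¹ = v - 2 + (v : ℝ)⁻¹ := by field_simp; ring
        linarith
    _ ≤ ((v : ℝ) - 1) ^ 2 := by nlinarith [sq_nonneg ((v : ℝ) - 1)]

variable {ι κ : Type*} [Fintype ι] [DecidableEq ι] [Fintype κ]

lemma dotProduct_mul_diagonal_mul_transpose_mulVec (M : Matrix κ ι ℝ) (v : ι → ℝ) (t : κ → ℝ) :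
    t ⬝ᵥ (M * Matrix.diagonal v * Mᵀ) *ᵥ t = ∑ l, v l * (Mᵀ *ᵥ t) l ^ 2 := by
  rw [← Matrix.mulVec_mulVec, ← Matrix.mulVec_mulVec, Matrix.dotProduct_mulVec,
    ← Matrix.mulVec_transpose]
  refine Finset.sum_congr rfl fun l _ => ?_
  rw [Matrix.mulVec_diagonal]
  ring

lemma charFun_map_mulVec_pi_gaussianReal (M : Matrix κ ι ℝ) (v : ι → ℝ≥0)
    (t : EuclideanSpace ℝ κ) :
    charFun ((Measure.pi fun l => gaussianReal 0 (v l)).map fun w => WithLp.toLp 2 (M *ᵥ w)) t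
      = Complex.exp (-↑(t.ofLp ⬝ᵥ (M * Matrix.diagonal (fun l => (v l : ℝ)) * Mᵀ) *ᵥ t.ofLp) / 2)
      := by
  have hadj : charFun ((Measure.pi fun l => gaussianReal 0 (v l)).map
        fun w => WithLp.toLp 2 (M *ᵥ w)) t
      = charFun ((Measure.pi fun l => gaussianReal 0 (v l)).map (WithLp.toLp 2))
        (WithLp.toLp 2 (Mᵀ *ᵥ t.ofLp)) := by
    rw [charFun, charFun, integral_map (by fun_prop) (by fun_prop),
      integral_map (by fun_prop) (by fun_prop)]
    simp only [EuclideanSpace.inner_eq_star_dotProduct, star_trivial, Matrix.mulVec_transpose,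
      Matrix.dotProduct_mulVec]
  rw [hadj, charFun_pi, dotProduct_mul_diagonal_mul_transpose_mulVec]
  simp only [charFun_gaussianReal]
  rw [← Complex.exp_sum]
  congr 1
  push_cast
  rw [← Finset.sum_neg_distrib, Finset.sum_div]
  refine Finset.sum_congr rfl fun l _ => ?_
  ring

lemma map_mulVec_pi_gaussianReal_eq {κ ι' : Type*} [Finite κ] [Fintype ι'] [DecidableEq ι']
    {M : Matrix κ ι ℝ} {M' : Matrix κ ι' ℝ} {v : ι → ℝ≥0} {v' : ι' → ℝ≥0}
    (h : M * Matrix.diagonal (fun l => (v l : ℝ)) * Mᵀ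
      = M' * Matrix.diagonal (fun l => (v' l : ℝ)) * M'ᵀ) :
    (Measure.pi fun l => gaussianReal 0 (v l)).map (fun w => M *ᵥ w)
      = (Measure.pi fun l => gaussianReal 0 (v' l)).map (fun w => M' *ᵥ w) := by
  cases nonempty_fintype κ
  refine (MeasurableEquiv.toLp 2 (κ → ℝ)).map_measurableEquiv_injective ?_
  rw [MeasurableEquiv.coe_toLp, Measure.map_map (by fun_prop) (by fun_prop),
    Measure.map_map (by fun_prop) (by fun_prop)]
  refine Measure.ext_of_charFun (E := EuclideanSpace ℝ κ) (funext fun t => ?_)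
  exact (charFun_map_mulVec_pi_gaussianReal M v t).trans
    (h ▸ (charFun_map_mulVec_pi_gaussianReal M' v' t).symm)

variable [DecidableEq κ]

lemma exists_mul_diagonal_mul_transpose_eq {S : Matrix κ κ ℝ} (hS : S.PosSemidef) :
    ∃ (U : Matrix κ κ ℝ) (v : κ → ℝ≥0),
      U * Uᵀ = 1 ∧ U * Matrix.diagonal (fun i => (v i : ℝ)) * Uᵀ = S := by
  refine ⟨hS.isHermitian.eigenvectorUnitary,
    fun i => (hS.isHermitian.eigenvalues i).toNNReal, ?_, ?_⟩
  · simpa [Matrix.star_eq_conjTranspose] using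
      Matrix.mem_unitaryGroup_iff.1 hS.isHermitian.eigenvectorUnitary.2
  · simpa [Matrix.star_eq_conjTranspose, hS.eigenvalues_nonneg, Function.comp_def] using
      hS.isHermitian.spectral_theorem.symm

/- The squared Frobenius norm is invariant under orthogonal conjugation. -/
lemma sum_sq_mul_diagonal_mul_transpose_sub_one {U : Matrix κ κ ℝ} (hU : U * Uᵀ = 1)
    (v : κ → ℝ) :
    ∑ i, ∑ j, (U * Matrix.diagonal v * Uᵀ - 1) i j ^ 2 = ∑ i, (v i - 1) ^ 2 := by
  set B : Matrix κ κ ℝ := Matrix.diagonal fun i => v i - 1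
  have hconj : U * Matrix.diagonal v * Uᵀ - 1 = U * B * Uᵀ := by
    have hB : B = Matrix.diagonal v - 1 := by
      rw [← Matrix.diagonal_one, Matrix.diagonal_sub]
    rw [hB, mul_sub, sub_mul, mul_one, hU]
  calc ∑ i, ∑ j, (U * Matrix.diagonal v * Uᵀ - 1) i j ^ 2
      = (U * B * Uᵀ * (U * B * Uᵀ)ᵀ).trace := by
        simp only [hconj, Matrix.trace, Matrix.diag_apply, Matrix.mul_apply (M := U * B * Uᵀ),
          Matrix.transpose_apply, sq]
    _ = (U * (B * B) * Uᵀ).trace := by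
        have hT : (U * B * Uᵀ)ᵀ = U * B * Uᵀ := by
          simp [B, Matrix.transpose_mul, mul_assoc]
        rw [hT, show U * B * Uᵀ * (U * B * Uᵀ) = U * B * (Uᵀ * U) * B * Uᵀ by
          simp only [mul_assoc], mul_eq_one_comm.1 hU, mul_one, mul_assoc U B B]
    _ = ∑ i, (v i - 1) ^ 2 := by
        rw [Matrix.trace_mul_comm, ← mul_assoc, mul_eq_one_comm.1 hU, one_mul,
          Matrix.diagonal_mul_diagonal, Matrix.trace_diagonal]
        simp only [sq]

lemma klDiv_map_mulVec_pi_gaussianReal_le (M : Matrix κ ι ℝ) (v : ι → ℝ≥0)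
    {S : Matrix κ κ ℝ} (hS : M * Matrix.diagonal (fun l => (v l : ℝ)) * Mᵀ = S)
    (h : ∑ i, ∑ j, (S - 1) i j ^ 2 ≤ 1 / 4) :
    klDiv ((Measure.pi fun l => gaussianReal 0 (v l)).map fun w => M *ᵥ w)
        (Measure.pi fun _ => gaussianReal 0 1)
      ≤ ENNReal.ofReal (∑ i, ∑ j, (S - 1) i j ^ 2) := by
  have hpos : S.PosSemidef := by
    simpa [← hS] using (Matrix.PosSemidef.diagonal
      (fun l => (v l).coe_nonneg)).mul_mul_conjTranspose_same M
  obtain ⟨U, lam, hU, hdiag⟩ := exists_mul_diagonal_mul_transpose_eq hpos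
  have hstd : (Measure.pi fun _ : κ => gaussianReal 0 1)
      = (Measure.pi fun _ : κ => gaussianReal 0 1).map fun w => U *ᵥ w := by
    conv_lhs => rw [← Measure.map_id (μ := Measure.pi fun _ : κ => gaussianReal 0 1)]
    simpa using map_mulVec_pi_gaussianReal_eq (M := 1) (M' := U) (v := fun _ : κ => 1)
      (v' := fun _ => 1) (by simp [hU])
  rw [← hdiag, sum_sq_mul_diagonal_mul_transpose_sub_one hU] at h ⊢
  have hlam : ∀ i, |(lam i : ℝ) - 1| ≤ 1 / 2 := fun i => by
    have := (Finset.single_le_sum (f := fun i => ((lam i : ℝ) - 1) ^ 2)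
      (fun _ _ => sq_nonneg _) (Finset.mem_univ i)).trans h
    exact abs_le_of_sq_le_sq (by linarith) (by norm_num)
  calc klDiv ((Measure.pi fun l => gaussianReal 0 (v l)).map fun w => M *ᵥ w)
        (Measure.pi fun _ => gaussianReal 0 1)
      = klDiv ((Measure.pi fun i => gaussianReal 0 (lam i)).map fun w => U *ᵥ w)
        ((Measure.pi fun _ => gaussianReal 0 1).map fun w => U *ᵥ w) := by
        rw [← hstd, map_mulVec_pi_gaussianReal_eq (hS.trans hdiag.symm)]
    _ ≤ klDiv (Measure.pi fun i => gaussianReal 0 (lam i)) (Measure.pi fun _ => gaussianReal 0 1) :=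
        klDiv_map_le _ _ (by fun_prop)
    _ = ∑ i, klDiv (gaussianReal 0 (lam i)) (gaussianReal 0 1) := klDiv_pi _ _
    _ ≤ ∑ i, ENNReal.ofReal (((lam i : ℝ) - 1) ^ 2) :=
        Finset.sum_le_sum fun i _ => klDiv_gaussianReal_le (lam i) (hlam i)
    _ = ENNReal.ofReal (∑ i, ((lam i : ℝ) - 1) ^ 2) :=
        (ENNReal.ofReal_sum_of_nonneg fun _ _ => sq_nonneg _).symm

end GaussianKL

section FiniteSpace

open InformationTheory

lemma klFun_le_sq_sub_one {x : ℝ} (hx : 0 ≤ x) : klFun x ≤ (x - 1) ^ 2 := by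
  have hlog : x * log x ≤ x * (x - 1) := by
    rcases hx.eq_or_lt with rfl | hx
    · simp
    · exact mul_le_mul_of_nonneg_left (log_le_sub_one_of_pos hx) hx.le
  rw [klFun]
  linarith

lemma klDiv_le_sum_sq_div {α : Type*} [Fintype α] [MeasurableSpace α]
    [MeasurableSingletonClass α] (μ ν : Measure α) [IsProbabilityMeasure μ]
    [IsProbabilityMeasure ν] (hν : ∀ a, ν.real {a} ≠ 0) :
    klDiv μ ν ≤ ENNReal.ofReal (∑ a, (μ.real {a} - ν.real {a}) ^ 2 / ν.real {a}) := by
  have hdens : ν.withDensity (fun a => μ {a} / ν {a}) = μ := by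
    refine Measure.ext_iff_singleton.2 fun a => ?_
    rw [withDensity_apply _ (measurableSet_singleton a), lintegral_singleton,
      ENNReal.div_mul_cancel (fun h => hν a (by simp [measureReal_def, h])) (measure_ne_top _ _)]
  have : IsFiniteMeasure (ν.withDensity fun a => μ {a} / ν {a}) := by
    rw [hdens]
    infer_instance
  have hkl := klDiv_withDensity ν (f := fun a => μ {a} / ν {a}) (measurable_of_finite _)
  rw [hdens] at hkl
  rw [hkl, lintegral_fintype, ENNReal.ofReal_sum_of_nonneg fun a _ => by positivity]
  refine Finset.sum_le_sum fun a _ => ?_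
  rw [ENNReal.toReal_div, ← ofReal_measureReal (μ := ν) (s := {a}),
    ENNReal.toReal_ofReal measureReal_nonneg, ← ENNReal.ofReal_mul' measureReal_nonneg,
    ← measureReal_def]
  refine ENNReal.ofReal_le_ofReal ?_
  have hpos : 0 < ν.real {a} := measureReal_nonneg.lt_of_ne' (hν a)
  calc klFun (μ.real {a} / ν.real {a}) * ν.real {a}
      ≤ (μ.real {a} / ν.real {a} - 1) ^ 2 * ν.real {a} := by
        gcongr
        exact klFun_le_sq_sub_one (by positivity)
    _ = (μ.real {a} - ν.real {a}) ^ 2 / ν.real {a} := by field_simp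

lemma measureReal_singleton_false (μ : Measure Prop) [IsProbabilityMeasure μ] :
    μ.real {False} = 1 - μ.real {True} := by
  rw [← probReal_compl_eq_one_sub (measurableSet_singleton True)]
  congr 1
  ext b
  by_cases hb : b <;> simp [hb]

lemma klDiv_prop_le (μ ν : Measure Prop) [IsProbabilityMeasure μ] [IsProbabilityMeasure ν]
    (hν : ν.real {True} ∈ Set.Ioo (0 : ℝ) 1) :
    klDiv μ ν ≤ ENNReal.ofReal
      ((μ.real {True} - ν.real {True}) ^ 2 / (ν.real {True} * (1 - ν.real {True}))) := by
  have h0 : ν.real {True} ≠ 0 := hν.1.ne'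
  have h1 : 1 - ν.real {True} ≠ 0 := (sub_pos.2 hν.2).ne'
  refine (klDiv_le_sum_sq_div μ ν fun b => ?_).trans_eq ?_
  · by_cases hb : b
    · simpa only [hb] using h0
    · simpa only [hb, measureReal_singleton_false] using h1
  · rw [Fintype.univ_Prop, Finset.sum_pair (by simp)]
    simp only [measureReal_singleton_false]
    congr 1
    field_simp
    ring

end FiniteSpace

section ProductLaws

variable {ι κ Ω : Type*} [Fintype ι] [Fintype κ] [MeasurableSpace Ω]

lemma map_comp_pi {μ : κ → Measure Ω} [∀ k, IsProbabilityMeasure (μ k)] {g : ι → κ}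
    (hg : Function.Injective g) :
    (Measure.pi μ).map (fun w i => w (g i)) = Measure.pi fun i => μ (g i) := by
  have hindep : iIndepFun (fun i (w : κ → Ω) => w (g i)) (Measure.pi μ) :=
    (iIndepFun_pi fun _ => aemeasurable_id).precomp hg
  rw [hindep.map_fun_eq_pi_map fun i => (measurable_pi_apply (g i)).aemeasurable]
  congr 1
  funext i
  exact (measurePreserving_eval μ (g i)).map_eq

lemma map_entries_pi_pi {ι' : Type*} [Fintype ι'] (μ : Measure Ω) [IsProbabilityMeasure μ]
    {g : ι → κ × ι'} (hg : Function.Injective g) :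
    (Measure.pi fun _ : κ => Measure.pi fun _ : ι' => μ).map (fun V i => V (g i).1 (g i).2)
      = Measure.pi fun _ => μ := by
  have hcurry := Measure.infinitePi_map_curry_symm fun (_ : κ) (_ : ι') => μ
  simp only [Measure.infinitePi_eq_pi] at hcurry
  rw [← map_comp_pi (μ := fun _ => μ) hg, ← hcurry,
    Measure.map_map (by fun_prop) (by fun_prop)]
  rfl

end ProductLaws

section RandomGraphs

open InformationTheory

/-- The random graph on `Fin n` whose edges are present independently, each according to a bit of
law `β`. -/
def bernoulliGraph (n : ℕ) (β : Measure Prop) : Measure (SimpleGraph (Fin n)) :=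
  (Measure.pi fun _ : Sym2 (Fin n) => β).map fun x => SimpleGraph.fromEdgeSet {e | x e}

lemma measurable_fromEdgeSet (n : ℕ) :
    Measurable fun x : Sym2 (Fin n) → Prop => SimpleGraph.fromEdgeSet {e | x e} :=
  .of_discrete

instance (n : ℕ) (β : Measure Prop) [IsProbabilityMeasure β] :
    IsProbabilityMeasure (bernoulliGraph n β) :=
  Measure.isProbabilityMeasure_map (by fun_prop)

lemma tvDist_bernoulliGraph_le (n : ℕ) (β β' : Measure Prop) [IsProbabilityMeasure β]
    [IsProbabilityMeasure β'] (hβ' : β'.real {True} ∈ Set.Ioo (0 : ℝ) 1) :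
    tvDist (bernoulliGraph n β) (bernoulliGraph n β')
      ≤ 2 / √(β'.real {True} * (1 - β'.real {True})) * (n * |β.real {True} - β'.real {True}|) := by
  set q := β'.real {True}
  set δ := β.real {True} - q
  have hkl := klDiv_prop_le β β' hβ'
  have hpi : klDiv (Measure.pi fun _ : Sym2 (Fin n) => β) (Measure.pi fun _ => β')
      = Fintype.card (Sym2 (Fin n)) * klDiv β β' := by
    rw [klDiv_pi, Finset.sum_const, Finset.card_univ, nsmul_eq_mul]
  have hfin : klDiv (Measure.pi fun _ : Sym2 (Fin n) => β) (Measure.pi fun _ => β') ≠ ∞ := by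
    rw [hpi]
    exact ENNReal.mul_ne_top (ENNReal.natCast_ne_top _)
      (ne_top_of_le_ne_top ENNReal.ofReal_ne_top hkl)
  have hcard : (Fintype.card (Sym2 (Fin n)) : ℝ) ≤ n ^ 2 := by
    have := Fintype.card_le_of_surjective
      (fun ij : Fin n × Fin n => s(ij.1, ij.2)) fun e => e.ind fun i j => ⟨(i, j), rfl⟩
    rw [Fintype.card_prod, Fintype.card_fin, ← sq] at this
    exact_mod_cast this
  have hq : 0 ≤ q * (1 - q) := mul_nonneg hβ'.1.le (sub_nonneg.2 hβ'.2.le)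
  calc tvDist (bernoulliGraph n β) (bernoulliGraph n β')
      ≤ 2 * √(Fintype.card (Sym2 (Fin n)) * (klDiv β β').toReal) := by
        rw [← ENNReal.toReal_natCast, ← ENNReal.toReal_mul, ← hpi]
        exact (tvDist_map_le _ _ (measurable_fromEdgeSet n)).trans (tvDist_le_sqrt_klDiv _ _ hfin)
    _ ≤ 2 * √(n ^ 2 * (δ ^ 2 / (q * (1 - q)))) := by
        gcongr
        exact ENNReal.toReal_le_of_le_ofReal (by positivity) hkl
    _ = 2 / √(q * (1 - q)) * (n * |δ|) := by
        rw [sqrt_mul (sq_nonneg _), sqrt_sq n.cast_nonneg, sqrt_div (sq_nonneg _), sqrt_sq_eq_abs]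
        ring

lemma erGraph_eq_bernoulliGraph (n : ℕ) (p : ℝ) :
    erGraph n p
      = bernoulliGraph n ((volume.restrict (Set.Icc (0 : ℝ) 1)).map fun u => u ≤ p) := by
  have : IsProbabilityMeasure (volume.restrict (Set.Icc (0 : ℝ) 1)) := ⟨by simp⟩
  have hp : Measurable fun u : ℝ => u ≤ p := measurableSet_Iic.mem
  rw [erGraph, bernoulliGraph, ← Measure.pi_map_pi fun _ => hp.aemeasurable,
    Measure.map_map (measurable_fromEdgeSet n) (by fun_prop)]
  congr 1
  funext x
  ext i j
  simp [SimpleGraph.fromRel_adj, Sym2.eq_swap (a := j), and_comm]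

/-- The graph in which `i < j` are adjacent iff the entry `V j i` below the diagonal is at
least `τ`. -/
def thresholdGraph {n : ℕ} (τ : ℝ) (V : Fin n → Fin n → ℝ) : SimpleGraph (Fin n) :=
  SimpleGraph.fromEdgeSet {e | τ ≤ V e.sup e.inf}

lemma measurable_thresholdGraph (n : ℕ) (τ : ℝ) :
    Measurable (thresholdGraph τ : (Fin n → Fin n → ℝ) → SimpleGraph (Fin n)) :=
  (measurable_fromEdgeSet n).comp <| measurable_pi_lambda _ fun e =>
      (measurableSet_le measurable_const (by fun_prop :
        Measurable fun V : Fin n → Fin n → ℝ => V e.sup e.inf)).mem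

lemma map_thresholdGraph_pi (n : ℕ) (τ : ℝ) (μ : Measure ℝ) [IsProbabilityMeasure μ] :
    (Measure.pi fun _ : Fin n => Measure.pi fun _ : Fin n => μ).map (thresholdGraph τ)
      = bernoulliGraph n (μ.map fun x => τ ≤ x) := by
  have hτ : Measurable fun x : ℝ => τ ≤ x := measurableSet_Ici.mem
  have hinj : Function.Injective fun e : Sym2 (Fin n) => (e.sup, e.inf) := fun e e' h =>
    Sym2.inf_eq_inf_and_sup_eq_sup.1 ⟨(Prod.ext_iff.1 h).2, (Prod.ext_iff.1 h).1⟩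
  rw [bernoulliGraph, ← Measure.pi_map_pi fun _ => hτ.aemeasurable, ← map_entries_pi_pi μ hinj,
    Measure.map_map (measurable_fromEdgeSet n) (by fun_prop),
    Measure.map_map ((measurable_fromEdgeSet n).comp (by fun_prop)) (by fun_prop)]
  rfl

end RandomGraphs

section Moments

lemma lintegral_sq_sum_sub_sum_integral {ι : Type*} [Fintype ι] {Ω : ι → Type*}
    [∀ i, MeasurableSpace (Ω i)] {μ : ∀ i, Measure (Ω i)} [∀ i, IsProbabilityMeasure (μ i)]
    {X : ∀ i, Ω i → ℝ} (hX : ∀ i, MemLp (X i) 2 (μ i)) :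
    ∫⁻ ω, ENNReal.ofReal ((∑ i, X i (ω i) - ∑ i, (μ i)[X i]) ^ 2) ∂(Measure.pi μ)
      = ENNReal.ofReal (∑ i, Var[X i; μ i]) := by
  have hXi : ∀ i, MemLp (fun ω : ∀ i, Ω i => X i (ω i)) 2 (Measure.pi μ) := fun i =>
    (hX i).comp_measurePreserving (measurePreserving_eval μ i)
  have hmean : (Measure.pi μ)[∑ i, fun ω : ∀ i, Ω i => X i (ω i)] = ∑ i, (μ i)[X i] := by
    simp only [Finset.sum_apply]
    rw [integral_finsetSum _ fun i _ => (hXi i).integrable one_le_two]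
    exact Finset.sum_congr rfl fun i _ => integral_comp_eval (hX i).aestronglyMeasurable
  rw [← variance_sum_pi hX, ofReal_variance (memLp_finsetSum' _ fun i _ => hXi i),
    evariance_eq_lintegral_ofReal, hmean]
  simp only [Finset.sum_apply]

/-- The fourth moment of the standard Gaussian measure on `ℝ`. -/
def gaussianFourthMoment : ℝ := ∫ x, x ^ 4 ∂(gaussianReal 0 1)

lemma memLp_sq_gaussianReal (v : ℝ≥0) : MemLp (fun x => x ^ 2) 2 (gaussianReal 0 v) := by
  rw [memLp_two_iff_integrable_sq (by fun_prop)]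
  have h4 := (memLp_id_gaussianReal' (μ := 0) (v := v) 4 (by norm_num)).integrable_norm_pow
    (by norm_num)
  refine h4.congr (ae_of_all _ fun x => ?_)
  simp only [norm_eq_abs, id, Even.pow_abs ⟨2, rfl⟩]
  ring

lemma integral_pow_four_gaussianReal (v : ℝ≥0) :
    ∫ x, x ^ 4 ∂(gaussianReal 0 v) = v ^ 2 * gaussianFourthMoment := by
  have hscale : gaussianReal 0 v = (gaussianReal 0 1).map (√(v : ℝ) * ·) := by
    rw [gaussianReal_map_const_mul]
    congr 1
    · simp
    · ext
      simp
  rw [hscale, integral_map (by fun_prop) (by fun_prop), gaussianFourthMoment,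
    ← integral_const_mul]
  refine integral_congr_ae (ae_of_all _ fun x => ?_)
  simp only [mul_pow, show √(v : ℝ) ^ 4 = (√(v : ℝ) ^ 2) ^ 2 by ring, sq_sqrt v.coe_nonneg]

lemma variance_sq_gaussianReal_le (v : ℝ≥0) :
    Var[fun x => x ^ 2; gaussianReal 0 v] ≤ v ^ 2 * gaussianFourthMoment := by
  rw [← integral_pow_four_gaussianReal]
  refine (variance_le_expectation_sq (by fun_prop)).trans_eq (integral_congr_ae (ae_of_all _ ?_))
  intro x
  simp only [Pi.pow_apply]
  ring

lemma one_le_gaussianFourthMoment : 1 ≤ gaussianFourthMoment := by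
  have h := variance_nonneg (fun x : ℝ => x ^ 2) (gaussianReal 0 1)
  rw [variance_eq_sub (memLp_sq_gaussianReal 1), integral_sq_gaussianReal] at h
  have hpow : ∫ x, ((fun x : ℝ => x ^ 2) ^ 2) x ∂(gaussianReal 0 1) = gaussianFourthMoment :=
    integral_congr_ae (ae_of_all _ fun x => by simp only [Pi.pow_apply]; ring)
  rw [hpow] at h
  simpa using h

variable {ι κ : Type*} [Fintype ι] [Fintype κ] (v : ι → ℝ≥0)

lemma lintegral_sq_sum_mul_sub_le :
    ∫⁻ x, ENNReal.ofReal ((∑ l, v l * x l * x l - ∑ l, (v l : ℝ) ^ 2) ^ 2)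
        ∂(Measure.pi fun l => gaussianReal 0 (v l))
      ≤ ENNReal.ofReal (gaussianFourthMoment * ∑ l, (v l : ℝ) ^ 4) := by
  have h := lintegral_sq_sum_sub_sum_integral (μ := fun l => gaussianReal 0 (v l))
    (X := fun l x => v l * x ^ 2) fun l => (memLp_sq_gaussianReal (v l)).const_mul _
  simp only [integral_const_mul, integral_sq_gaussianReal, ← sq, variance_const_mul] at h
  simp only [mul_assoc, ← sq, h]
  refine ENNReal.ofReal_le_ofReal ?_
  rw [Finset.mul_sum]
  refine Finset.sum_le_sum fun l _ => ?_
  calc (v l : ℝ) ^ 2 * Var[fun x => x ^ 2; gaussianReal 0 (v l)]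
      ≤ (v l : ℝ) ^ 2 * (v l ^ 2 * gaussianFourthMoment) := by
        gcongr
        exact variance_sq_gaussianReal_le (v l)
    _ = gaussianFourthMoment * (v l : ℝ) ^ 4 := by ring

lemma lintegral_sq_sum_mul_gaussianReal (a : ι → ℝ) :
    ∫⁻ y, ENNReal.ofReal ((∑ l, a l * y l) ^ 2) ∂(Measure.pi fun l => gaussianReal 0 (v l))
      = ENNReal.ofReal (∑ l, a l ^ 2 * v l) := by
  have h := lintegral_sq_sum_sub_sum_integral (μ := fun l => gaussianReal 0 (v l))
    (X := fun l x => a l * x)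
    fun l => (memLp_id_gaussianReal' (μ := 0) (v := v l) 2 (by norm_num)).const_mul (a l)
  have hmean : ∀ l, ∫ x, a l * x ∂(gaussianReal 0 (v l)) = 0 := fun l => by
    rw [integral_const_mul, integral_id_gaussianReal, mul_zero]
  have hvar : ∀ l, Var[fun x => a l * x; gaussianReal 0 (v l)] = a l ^ 2 * v l := fun l => by
    rw [variance_const_mul, variance_fun_id_gaussianReal]
  simpa only [hmean, hvar, Finset.sum_const_zero, sub_zero] using h

lemma lintegral_sq_sum_mul_mul_prod :
    ∫⁻ z, ENNReal.ofReal ((∑ l, v l * z.1 l * z.2 l) ^ 2)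
        ∂((Measure.pi fun l => gaussianReal 0 (v l)).prod
          (Measure.pi fun l => gaussianReal 0 (v l)))
      = ENNReal.ofReal (∑ l, (v l : ℝ) ^ 4) := by
  have hcoord : ∀ l, ∫⁻ x : ι → ℝ, ENNReal.ofReal ((v l : ℝ) ^ 3 * x l ^ 2)
      ∂(Measure.pi fun l => gaussianReal 0 (v l)) = ENNReal.ofReal ((v l : ℝ) ^ 4) := fun l => by
    have h := lintegral_sq_sum_mul_gaussianReal v (Pi.single l 1)
    simp only [Pi.single_apply, ite_mul, one_mul, zero_mul, ite_pow, one_pow, Finset.sum_ite_eq',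
      Finset.mem_univ, if_true, ne_eq, OfNat.ofNat_ne_zero, not_false_eq_true, zero_pow] at h
    simp only [ENNReal.ofReal_mul (pow_nonneg (v l).coe_nonneg 3)]
    rw [lintegral_const_mul _ (by fun_prop), h, ← ENNReal.ofReal_mul (by positivity)]
    ring_nf
  rw [lintegral_prod _ (by fun_prop), ENNReal.ofReal_sum_of_nonneg fun l _ => by positivity,
    ← Finset.sum_congr rfl fun l _ => hcoord l, ← lintegral_finsetSum _ fun l _ => by fun_prop]
  refine lintegral_congr fun x => ?_
  rw [lintegral_sq_sum_mul_gaussianReal v fun l => v l * x l,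
    ENNReal.ofReal_sum_of_nonneg fun l _ => by positivity]
  refine Finset.sum_congr rfl fun l _ => ?_
  congr 1
  ring

lemma measurePreserving_eval_prodMk {Ω : κ → Type*} [∀ k, MeasurableSpace (Ω k)]
    (μ : ∀ k, Measure (Ω k)) [∀ k, IsProbabilityMeasure (μ k)] {i j : κ} (hij : i ≠ j) :
    MeasurePreserving (fun x => (x i, x j)) (Measure.pi μ) ((μ i).prod (μ j)) := by
  have hindep : IndepFun (fun x : ∀ k, Ω k => x i) (fun x => x j) (Measure.pi μ) :=
    (iIndepFun_pi (X := fun _ x => x) fun _ => aemeasurable_id).indepFun hij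
  refine ⟨by fun_prop, ?_⟩
  rw [hindep.map_prod_eq_prod_map_map (measurable_pi_apply i).aemeasurable
      (measurable_pi_apply j).aemeasurable,
    (measurePreserving_eval μ i).map_eq, (measurePreserving_eval μ j).map_eq]

lemma lintegral_sq_gram_sub_le (i j : κ) :
    ∫⁻ x, ENNReal.ofReal
        ((∑ l, v l * x i l * x j l - if i = j then ∑ l, (v l : ℝ) ^ 2 else 0) ^ 2)
        ∂(Measure.pi fun _ : κ => Measure.pi fun l => gaussianReal 0 (v l))
      ≤ ENNReal.ofReal (gaussianFourthMoment * ∑ l, (v l : ℝ) ^ 4) := by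
  let P := Measure.pi fun l => gaussianReal 0 (v l)
  by_cases hij : i = j
  · subst hij
    simp only [if_true]
    rw [(measurePreserving_eval (fun _ : κ => P) i).lintegral_comp
      (f := fun x => ENNReal.ofReal ((∑ l, v l * x l * x l - ∑ l, (v l : ℝ) ^ 2) ^ 2))
      (by fun_prop)]
    exact lintegral_sq_sum_mul_sub_le v
  · simp only [if_neg hij, sub_zero]
    rw [(measurePreserving_eval_prodMk (fun _ : κ => P) hij).lintegral_comp
      (f := fun z => ENNReal.ofReal ((∑ l, v l * z.1 l * z.2 l) ^ 2)) (by fun_prop),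
      lintegral_sq_sum_mul_mul_prod v]
    exact ENNReal.ofReal_le_ofReal <|
      le_mul_of_one_le_left (by positivity) one_le_gaussianFourthMoment

end Moments

section Rows

open InformationTheory
open scoped Matrix

variable {n d k : ℕ} (α : Fin d → ℝ)

/-- The variances of the coordinates of a sample of `N(0, D_α)` followed by `n` auxiliary standard
Gaussian coordinates. -/
def augVar (n : ℕ) : Fin d ⊕ Fin n → ℝ≥0 := Sum.elim (fun l => (α l).toNNReal) 1

/-- The joint law of a sample of `N(0, D_α)` and of `n` independent standard Gaussian variables. -/
def augGaussian (n : ℕ) : Measure (Fin d ⊕ Fin n → ℝ) :=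
  Measure.pi fun l => gaussianReal 0 (augVar α n l)

instance (n : ℕ) : IsProbabilityMeasure (augGaussian α n) := by
  unfold augGaussian
  infer_instance

/-- The matrix sending an augmented sample `w` to the row vector whose `i`-th coordinate is the
normalized inner product of `w` with the position of `Z i` if `i < k`, and the `i`-th auxiliary
coordinate of `w` otherwise. -/
def rowMatrix (Z : Fin k → Fin d ⊕ Fin n → ℝ) : Matrix (Fin n) (Fin d ⊕ Fin n) ℝ :=
  Matrix.of fun i => if h : (i : ℕ) < k then
    Sum.elim (fun l => Z ⟨i, h⟩ (.inl l) / √(∑ l, α l ^ 2)) 0 else Sum.elim 0 (Pi.single i 1)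

/-- The covariance matrix of `rowMatrix α Z *ᵥ w` for `w` of law `augGaussian α n`. -/
def rowCov (Z : Fin k → Fin d ⊕ Fin n → ℝ) : Matrix (Fin n) (Fin n) ℝ :=
  rowMatrix α Z * Matrix.diagonal (fun l => (augVar α n l : ℝ)) * (rowMatrix α Z)ᵀ

/-- The squared Frobenius distance from the covariance matrix `rowCov α Z` to the identity. -/
def gramDefect (Z : Fin k → Fin d ⊕ Fin n → ℝ) : ℝ :=
  ∑ i, ∑ j, (rowCov α Z - 1) i j ^ 2

/-- The `k`-th row of normalized inner products of the augmented sample `w` with the earlier samples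
`Z`, replaced by the auxiliary coordinates of `w` when the earlier positions are far from being
orthonormal. -/
def truncatedRow (n k : ℕ) (Z : Fin k → Fin d ⊕ Fin n → ℝ) (w : Fin d ⊕ Fin n → ℝ) : Fin n → ℝ :=
  if gramDefect α Z ≤ 1 / 4 then rowMatrix α Z *ᵥ w else fun i => w (.inr i)

lemma rowMatrix_mulVec_of_lt (Z : Fin k → Fin d ⊕ Fin n → ℝ) (w : Fin d ⊕ Fin n → ℝ) {i : Fin n}
    (h : (i : ℕ) < k) :
    (rowMatrix α Z *ᵥ w) i = (∑ l, Z ⟨i, h⟩ (.inl l) * w (.inl l)) / √(∑ l, α l ^ 2) := by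
  simp only [rowMatrix, Matrix.mulVec, dotProduct, Matrix.of_apply, dif_pos h,
    Fintype.sum_sum_type, Sum.elim_inl, Sum.elim_inr, Pi.zero_apply, zero_mul,
    Finset.sum_const_zero, add_zero, Finset.sum_div]
  exact Finset.sum_congr rfl fun l _ => by ring

lemma rowCov_sub_one_apply (hα : ∀ l, 0 ≤ α l) (hs : 0 < ∑ l, α l ^ 2)
    (Z : Fin k → Fin d ⊕ Fin n → ℝ) (i j : Fin n) :
    (rowCov α Z - 1) i j = if h : (i : ℕ) < k ∧ (j : ℕ) < k then
        (∑ l, α l * Z ⟨i, h.1⟩ (.inl l) * Z ⟨j, h.2⟩ (.inl l)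
          - if (⟨i, h.1⟩ : Fin k) = ⟨j, h.2⟩ then ∑ l, α l ^ 2 else 0) / ∑ l, α l ^ 2
        else 0 := by
  rw [Matrix.sub_apply, rowCov, Matrix.mul_apply, Fintype.sum_sum_type]
  simp only [Matrix.mul_diagonal, Matrix.transpose_apply, augVar, Sum.elim_inl, Sum.elim_inr,
    coe_toNNReal _ (hα _), Pi.one_apply, NNReal.coe_one, mul_one, rowMatrix, Matrix.of_apply,
    Matrix.one_apply, Fin.mk.injEq, ← Fin.ext_iff]
  by_cases hi : (i : ℕ) < k <;> by_cases hj : (j : ℕ) < k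
  · have hentry : ∀ l, Z ⟨i, hi⟩ (.inl l) / √(∑ l, α l ^ 2) * α l
        * (Z ⟨j, hj⟩ (.inl l) / √(∑ l, α l ^ 2))
        = α l * Z ⟨i, hi⟩ (.inl l) * Z ⟨j, hj⟩ (.inl l) / ∑ l, α l ^ 2 := fun l => by
      rw [div_mul_eq_mul_div, div_mul_div_comm, mul_self_sqrt hs.le, mul_comm (Z _ _)]
    simp only [hi, hj, and_self, dif_pos, Sum.elim_inl, Sum.elim_inr, Pi.zero_apply, mul_zero,
      Finset.sum_const_zero, add_zero, hentry]
    rw [sub_div, Finset.sum_div, ite_div, zero_div, div_self hs.ne']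
  · have hij : i ≠ j := fun h => hj (h ▸ hi)
    simp [hi, hj, hij]
  · have hij : i ≠ j := fun h => hi (h ▸ hj)
    simp [hi, hj, hij]
  · simp [hi, hj, Pi.single_apply, eq_comm]

lemma measurable_rowMatrix_apply (i : Fin n) (l : Fin d ⊕ Fin n) :
    Measurable fun Z : Fin k → Fin d ⊕ Fin n → ℝ => rowMatrix α Z i l := by
  by_cases h : (i : ℕ) < k <;> cases l <;> simp only [rowMatrix, Matrix.of_apply, h, dif_pos,
    dif_neg, not_false_eq_true, Sum.elim_inl, Sum.elim_inr] <;> fun_prop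

lemma measurable_rowCov_sub_one_apply (i j : Fin n) :
    Measurable fun Z : Fin k → Fin d ⊕ Fin n → ℝ => (rowCov α Z - 1) i j := by
  have hM := measurable_rowMatrix_apply (n := n) (k := k) α
  have hentry : ∀ Z : Fin k → Fin d ⊕ Fin n → ℝ, (rowCov α Z - 1) i j
      = ∑ l, rowMatrix α Z i l * augVar α n l * rowMatrix α Z j l
        - (1 : Matrix (Fin n) (Fin n) ℝ) i j := fun Z => by
    rw [Matrix.sub_apply, rowCov, Matrix.mul_apply]
    simp only [Matrix.mul_diagonal, Matrix.transpose_apply]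
  simp only [hentry]
  exact (Finset.measurable_sum _ fun l _ =>
    ((hM i l).mul_const _).mul (hM j l)).sub_const _

lemma measurable_gramDefect :
    Measurable (gramDefect α : (Fin k → Fin d ⊕ Fin n → ℝ) → ℝ) :=
  Finset.measurable_sum _ fun i _ => Finset.measurable_sum _ fun j _ =>
    (measurable_rowCov_sub_one_apply α i j).pow_const 2

lemma measurable_uncurry_truncatedRow (n k : ℕ) :
    Measurable (Function.uncurry (truncatedRow α n k)) := by
  refine Measurable.ite (measurableSet_le ((measurable_gramDefect α).comp measurable_fst)
    measurable_const) (measurable_pi_lambda _ fun i => ?_) (by fun_prop)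
  have hM : ∀ l, Measurable fun c : (Fin k → Fin d ⊕ Fin n → ℝ) × (Fin d ⊕ Fin n → ℝ) =>
    rowMatrix α c.1 i l := fun l => (measurable_rowMatrix_apply α i l).comp measurable_fst
  exact Finset.measurable_sum Finset.univ fun l _ =>
    (hM l).mul ((measurable_pi_apply l).comp measurable_snd)

lemma klDiv_map_truncatedRow_le (Z : Fin k → Fin d ⊕ Fin n → ℝ) :
    klDiv ((augGaussian α n).map (truncatedRow α n k Z)) (Measure.pi fun _ => gaussianReal 0 1)
      ≤ ENNReal.ofReal (gramDefect α Z) := by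
  by_cases h : gramDefect α Z ≤ 1 / 4
  · have hrow : truncatedRow α n k Z = fun w => rowMatrix α Z *ᵥ w := funext fun _ => if_pos h
    rw [hrow]
    exact klDiv_map_mulVec_pi_gaussianReal_le (S := rowCov α Z) (rowMatrix α Z) (augVar α n) rfl h
  · have hrow : truncatedRow α n k Z = fun w i => w (.inr i) := funext fun _ => if_neg h
    have hlaw : (augGaussian α n).map (fun w i => w (.inr i))
        = Measure.pi fun _ => gaussianReal 0 1 :=
      map_comp_pi (μ := fun l => gaussianReal 0 (augVar α n l)) Sum.inr_injective
    rw [hrow, hlaw, klDiv_self]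
    exact zero_le

lemma measurePreserving_positions (n k : ℕ) :
    MeasurePreserving (fun W i l => W i (.inl l)) (Measure.pi fun _ : Fin k => augGaussian α n)
      (sampleMeasure k d α) := by
  have hpos : (augGaussian α n).map (fun w l => w (.inl l)) = gaussPi d α :=
    map_comp_pi (μ := fun l => gaussianReal 0 (augVar α n l)) Sum.inl_injective
  have hmeas : Measurable fun (w : Fin d ⊕ Fin n → ℝ) l => w (.inl l) := by fun_prop
  refine ⟨by fun_prop, ?_⟩
  rw [sampleMeasure, ← hpos]
  exact Measure.pi_map_pi (f := fun _ w l => w (.inl l)) (μ := fun _ => augGaussian α n)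
    fun _ => hmeas.aemeasurable

lemma lintegral_sq_rowCov_sub_one_le (hα : ∀ l, 0 ≤ α l) (hs : 0 < ∑ l, α l ^ 2) (i j : Fin n) :
    ∫⁻ Z : Fin k → Fin d ⊕ Fin n → ℝ, ENNReal.ofReal ((rowCov α Z - 1) i j ^ 2)
        ∂(Measure.pi fun _ => augGaussian α n)
      ≤ ENNReal.ofReal (gaussianFourthMoment * ((∑ l, α l ^ 4) / (∑ l, α l ^ 2) ^ 2)) := by
  by_cases h : (i : ℕ) < k ∧ (j : ℕ) < k
  · have hgram := lintegral_sq_gram_sub_le (fun l => (α l).toNNReal) (⟨i, h.1⟩ : Fin k) ⟨j, h.2⟩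
    simp only [coe_toNNReal _ (hα _)] at hgram
    simp only [rowCov_sub_one_apply α hα hs, dif_pos h, div_pow, ENNReal.ofReal_div_of_pos
      (pow_pos hs 2), ENNReal.div_eq_inv_mul]
    rw [lintegral_const_mul _ (by fun_prop),
      (measurePreserving_positions α n k).lintegral_comp (f := fun x => ENNReal.ofReal
        ((∑ l, α l * x ⟨i, h.1⟩ l * x ⟨j, h.2⟩ l
          - if (⟨i, h.1⟩ : Fin k) = ⟨j, h.2⟩ then ∑ l, α l ^ 2 else 0) ^ 2)) (by fun_prop)]
    rw [← mul_div_assoc, ENNReal.ofReal_div_of_pos (pow_pos hs 2), ENNReal.div_eq_inv_mul]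
    gcongr
    exact hgram
  · simp [rowCov_sub_one_apply α hα hs, dif_neg h]

lemma lintegral_gramDefect_le (hα : ∀ l, 0 ≤ α l) (hs : 0 < ∑ l, α l ^ 2) (n k : ℕ) :
    ∫⁻ Z : Fin k → Fin d ⊕ Fin n → ℝ, ENNReal.ofReal (gramDefect α Z)
        ∂(Measure.pi fun _ => augGaussian α n)
      ≤ ENNReal.ofReal
        (n ^ 2 * (gaussianFourthMoment * ((∑ l, α l ^ 4) / (∑ l, α l ^ 2) ^ 2))) := by
  have hmeas : ∀ i j : Fin n, Measurable fun Z : Fin k → Fin d ⊕ Fin n → ℝ =>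
      ENNReal.ofReal ((rowCov α Z - 1) i j ^ 2) := fun i j =>
    ((measurable_rowCov_sub_one_apply α i j).pow_const 2).ennreal_ofReal
  have hsum : ∀ Z : Fin k → Fin d ⊕ Fin n → ℝ, ENNReal.ofReal (gramDefect α Z)
      = ∑ i, ∑ j, ENNReal.ofReal ((rowCov α Z - 1) i j ^ 2) := fun Z => by
    have hrow : ∀ i, 0 ≤ ∑ j, (rowCov α Z - 1) i j ^ 2 := fun i =>
      Finset.sum_nonneg fun j _ => sq_nonneg _
    exact (ENNReal.ofReal_sum_of_nonneg fun i _ => hrow i).trans <|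
      Finset.sum_congr rfl fun i _ => ENNReal.ofReal_sum_of_nonneg fun j _ => sq_nonneg _
  calc ∫⁻ Z, ENNReal.ofReal (gramDefect α Z) ∂(Measure.pi fun _ => augGaussian α n)
      = ∑ i, ∑ j, ∫⁻ Z : Fin k → Fin d ⊕ Fin n → ℝ, ENNReal.ofReal ((rowCov α Z - 1) i j ^ 2)
          ∂(Measure.pi fun _ => augGaussian α n) := by
        simp only [hsum]
        rw [lintegral_finsetSum _ fun i _ => Finset.measurable_sum _ fun j _ => hmeas i j]
        exact Finset.sum_congr rfl fun i _ => lintegral_finsetSum _ fun j _ => hmeas i j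
    _ ≤ ∑ i : Fin n, ∑ j : Fin n, ENNReal.ofReal
          (gaussianFourthMoment * ((∑ l, α l ^ 4) / (∑ l, α l ^ 2) ^ 2)) :=
        Finset.sum_le_sum fun i _ => Finset.sum_le_sum fun j _ =>
          lintegral_sq_rowCov_sub_one_le α hα hs i j
    _ = _ := by
        rw [ENNReal.ofReal_mul (sq_nonneg (n : ℝ)), ENNReal.ofReal_pow n.cast_nonneg,
          ENNReal.ofReal_natCast, sq (n : ℝ≥0∞)]
        simp only [Finset.sum_const, Finset.card_univ, Fintype.card_fin, nsmul_eq_mul, mul_assoc]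

end Rows

section Coupling

open InformationTheory
open scoped Matrix

variable {n d k : ℕ} {α : Fin d → ℝ}

lemma gramDefect_castLE_le (hα : ∀ l, 0 ≤ α l) (hs : 0 < ∑ l, α l ^ 2) {m : ℕ} (hk : k ≤ m)
    (W : Fin m → Fin d ⊕ Fin n → ℝ) :
    gramDefect α (fun i => W (Fin.castLE hk i)) ≤ gramDefect α W := by
  refine Finset.sum_le_sum fun i _ => Finset.sum_le_sum fun j _ => ?_
  by_cases h : (i : ℕ) < k ∧ (j : ℕ) < k
  · have hm : (i : ℕ) < m ∧ (j : ℕ) < m := ⟨h.1.trans_le hk, h.2.trans_le hk⟩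
    simp only [rowCov_sub_one_apply α hα hs, dif_pos h, dif_pos hm, Fin.castLE_mk, Fin.mk.injEq,
      le_refl]
  · simp only [rowCov_sub_one_apply α hα hs, dif_neg h, ne_eq, OfNat.ofNat_ne_zero,
      not_false_eq_true, zero_pow, sq_nonneg]

lemma sequentialOutput_truncatedRow_apply (hα : ∀ l, 0 ≤ α l) (hs : 0 < ∑ l, α l ^ 2)
    {W : Fin n → Fin d ⊕ Fin n → ℝ} (hW : gramDefect α W ≤ 1 / 4) {i j : Fin n} (hij : i < j) :
    sequentialOutput (truncatedRow α n) n W j i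
      = dotp (fun l => W j (.inl l)) (fun l => W i (.inl l)) / √(∑ l, α l ^ 2) := by
  rw [sequentialOutput, truncatedRow,
    if_pos ((gramDefect_castLE_le hα hs j.isLt.le W).trans hW), rowMatrix_mulVec_of_lt α _ _ hij]
  simp only [dotp, mul_comm, Fin.castLE_mk, Fin.eta]

lemma dotp_comm (x y : Fin d → ℝ) : dotp x y = dotp y x :=
  Finset.sum_congr rfl fun _ _ => mul_comm _ _

lemma fromRel_dotp_eq_thresholdGraph (t : ℝ) (X : Fin n → Fin d → ℝ) :
    SimpleGraph.fromRel (fun i j => t ≤ dotp (X i) (X j))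
      = thresholdGraph t fun j i => dotp (X j) (X i) := by
  ext i j
  simp only [thresholdGraph, SimpleGraph.fromRel_adj, SimpleGraph.fromEdgeSet_adj,
    Set.mem_ofPred_eq, Sym2.sup_mk, Sym2.inf_mk, dotp_comm (X j) (X i), or_self,
    and_comm (a := i ≠ j)]
  rcases le_total i j with h | h
  · rw [sup_eq_right.2 h, inf_eq_left.2 h, dotp_comm]
  · rw [sup_eq_left.2 h, inf_eq_right.2 h]

lemma measurable_fromRel_dotp (n d : ℕ) (t : ℝ) :
    Measurable fun X : Fin n → Fin d → ℝ =>
      SimpleGraph.fromRel fun i j => t ≤ dotp (X i) (X j) := by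
  simp only [fromRel_dotp_eq_thresholdGraph]
  refine (measurable_thresholdGraph n t).comp ?_
  simp only [dotp]
  fun_prop

instance (n d : ℕ) (α : Fin d → ℝ) (t : ℝ) : IsProbabilityMeasure (geomGraph n d α t) := by
  unfold geomGraph sampleMeasure gaussPi
  exact Measure.isProbabilityMeasure_map (measurable_fromRel_dotp n d t).aemeasurable

lemma fromRel_dotp_eq_thresholdGraph_sequentialOutput (hα : ∀ l, 0 ≤ α l)
    (hs : 0 < ∑ l, α l ^ 2) {W : Fin n → Fin d ⊕ Fin n → ℝ} (hW : gramDefect α W ≤ 1 / 4) (t : ℝ) :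
    SimpleGraph.fromRel (fun i j => t ≤ dotp (fun l => W i (.inl l)) (fun l => W j (.inl l)))
      = thresholdGraph (t / √(∑ l, α l ^ 2)) (sequentialOutput (truncatedRow α n) n W) := by
  rw [fromRel_dotp_eq_thresholdGraph t fun i l => W i (.inl l)]
  have hlt : ∀ {i j : Fin n}, i ≠ j → i ⊓ j < i ⊔ j := fun h => inf_lt_sup.2 h
  ext i j
  simp only [thresholdGraph, SimpleGraph.fromEdgeSet_adj, Set.mem_ofPred_eq, Sym2.sup_mk,
    Sym2.inf_mk]
  refine and_congr_left fun hij => ?_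
  rw [sequentialOutput_truncatedRow_apply hα hs hW (hlt hij),
    div_le_div_iff_of_pos_right (sqrt_pos.2 hs)]

lemma measureReal_gramDefect_le (hα : ∀ l, 0 ≤ α l) (hs : 0 < ∑ l, α l ^ 2) (n k : ℕ) :
    (Measure.pi fun _ : Fin k => augGaussian α n).real {Z | 1 / 4 < gramDefect α Z}
      ≤ 4 * (n ^ 2 * (gaussianFourthMoment * ((∑ l, α l ^ 4) / (∑ l, α l ^ 2) ^ 2))) := by
  have hg := zero_le_one.trans one_le_gaussianFourthMoment
  have hsub : {Z : Fin k → Fin d ⊕ Fin n → ℝ | 1 / 4 < gramDefect α Z}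
      ⊆ {Z | ENNReal.ofReal (1 / 4) ≤ ENNReal.ofReal (gramDefect α Z)} := fun Z hZ =>
    ENNReal.ofReal_le_ofReal (le_of_lt hZ)
  refine ENNReal.toReal_le_of_le_ofReal (by positivity) ((measure_mono hsub).trans ?_)
  refine (meas_ge_le_lintegral_div (measurable_gramDefect α).ennreal_ofReal.aemeasurable
    (by simp) ENNReal.ofReal_ne_top).trans ?_
  grw [lintegral_gramDefect_le α hα hs n k]
  rw [← ENNReal.ofReal_div_of_pos (by norm_num)]
  exact ENNReal.ofReal_le_ofReal (by linarith)

lemma klDiv_map_sequentialOutput_truncatedRow_le (hα : ∀ l, 0 ≤ α l) (hs : 0 < ∑ l, α l ^ 2)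
    (n : ℕ) :
    klDiv ((Measure.pi fun _ => augGaussian α n).map (sequentialOutput (truncatedRow α n) n))
        (Measure.pi fun _ => Measure.pi fun _ => gaussianReal 0 1)
      ≤ ENNReal.ofReal
        (n * (n ^ 2 * (gaussianFourthMoment * ((∑ l, α l ^ 4) / (∑ l, α l ^ 2) ^ 2)))) := by
  have hac : ∀ k (Z : Fin k → Fin d ⊕ Fin n → ℝ),
      (augGaussian α n).map (truncatedRow α n k Z) ≪ Measure.pi fun _ => gaussianReal 0 1 :=
    fun k Z => (klDiv_ne_top_iff.1 <|
      ne_top_of_le_ne_top ENNReal.ofReal_ne_top (klDiv_map_truncatedRow_le α Z)).1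
  refine (klDiv_map_sequentialOutput_le _ _ (measurable_uncurry_truncatedRow α n) hac n).trans ?_
  rw [ENNReal.ofReal_mul n.cast_nonneg, ENNReal.ofReal_natCast, ← nsmul_eq_mul]
  refine (Finset.sum_le_card_nsmul _ _ _ fun k _ => ?_).trans_eq (by rw [Finset.card_range])
  exact (lintegral_mono fun Z => klDiv_map_truncatedRow_le α Z).trans
    (lintegral_gramDefect_le α hα hs n k)

lemma tvDist_geomGraph_bernoulliGraph_le (hα : ∀ l, 0 ≤ α l) (hs : 0 < ∑ l, α l ^ 2) (t : ℝ)
    (n : ℕ) :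
    tvDist (geomGraph n d α t)
        (bernoulliGraph n ((gaussianReal 0 1).map fun x => t / √(∑ l, α l ^ 2) ≤ x))
      ≤ 4 * (n ^ 2 * (gaussianFourthMoment * ((∑ l, α l ^ 4) / (∑ l, α l ^ 2) ^ 2)))
        + 2 * √(n * (n ^ 2 * (gaussianFourthMoment * ((∑ l, α l ^ 4) / (∑ l, α l ^ 2) ^ 2)))) := by
  set τ := t / √(∑ l, α l ^ 2)
  let P := Measure.pi fun _ : Fin n => augGaussian α n
  have hpos := measurePreserving_positions α n n
  have hout := measurable_sequentialOutput (measurable_uncurry_truncatedRow α n) n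
  have hτ := measurable_thresholdGraph n τ
  have hgeom := measurable_fromRel_dotp n d t
  have hlaw : geomGraph n d α t = P.map ((fun X => SimpleGraph.fromRel fun i j =>
      t ≤ dotp (X i) (X j)) ∘ fun W i l => W i (.inl l)) := by
    rw [geomGraph, ← hpos.map_eq, Measure.map_map hgeom hpos.measurable]
  have : IsProbabilityMeasure ((gaussianReal 0 1).map fun x => τ ≤ x) :=
    Measure.isProbabilityMeasure_map measurableSet_Ici.mem.aemeasurable
  have : IsProbabilityMeasure (P.map (sequentialOutput (truncatedRow α n) n)) :=
    Measure.isProbabilityMeasure_map hout.aemeasurable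
  have : IsProbabilityMeasure (P.map (thresholdGraph τ ∘ sequentialOutput (truncatedRow α n) n)) :=
    Measure.isProbabilityMeasure_map (hτ.comp hout).aemeasurable
  refine (tvDist_triangle _ (P.map (thresholdGraph τ ∘ sequentialOutput (truncatedRow α n) n))
    _).trans (add_le_add ?_ ?_)
  · rw [hlaw]
    refine (tvDist_map_map_le P (hgeom.comp hpos.measurable) (hτ.comp hout) fun W hW => ?_).trans
      (measureReal_gramDefect_le hα hs n n)
    exact fromRel_dotp_eq_thresholdGraph_sequentialOutput hα hs (not_lt.1 hW) t
  · have hkl := klDiv_map_sequentialOutput_truncatedRow_le hα hs n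
    rw [← Measure.map_map hτ hout, ← map_thresholdGraph_pi]
    refine (tvDist_map_le _ _ hτ).trans ((tvDist_le_sqrt_klDiv _ _
      (ne_top_of_le_ne_top ENNReal.ofReal_ne_top hkl)).trans ?_)
    have hg := zero_le_one.trans one_le_gaussianFourthMoment
    gcongr
    exact ENNReal.toReal_le_of_le_ofReal (by positivity) hkl

end Coupling

section EdgeProbability

variable {n d : ℕ} {α : Fin d → ℝ}

lemma measureReal_adj_bernoulliGraph (β : Measure Prop) [IsProbabilityMeasure β] {i j : Fin n}
    (hij : i ≠ j) : (bernoulliGraph n β).real {G | G.Adj i j} = β.real {True} := by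
  have hedge := (measurePreserving_eval (fun _ : Sym2 (Fin n) => β) s(i, j)).measureReal_preimage
    (MeasurableSet.singleton True).nullMeasurableSet
  rw [bernoulliGraph, map_measureReal_apply (measurable_fromEdgeSet n) trivial, ← hedge]
  congr 1
  ext x
  simp [hij]

lemma measureReal_adj_geomGraph {p t : ℝ} (hp : 0 ≤ p) (ht : IsThreshold d α p t) {i j : Fin n}
    (hij : i ≠ j) : (geomGraph n d α t).real {G | G.Adj i j} = p := by
  have hadj : ∀ X : Fin n → Fin d → ℝ,
      (SimpleGraph.fromRel fun i j => t ≤ dotp (X i) (X j)).Adj i j ↔ t ≤ dotp (X i) (X j) :=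
    fun X => by simp [SimpleGraph.fromRel_adj, hij, dotp_comm (X j)]
  have : IsProbabilityMeasure (gaussPi d α) := by unfold gaussPi; infer_instance
  have hmeas : MeasurableSet {xy : (Fin d → ℝ) × (Fin d → ℝ) | t ≤ dotp xy.1 xy.2} :=
    measurableSet_le measurable_const (by simp only [dotp]; fun_prop)
  have hpair := (measurePreserving_eval_prodMk (fun _ : Fin n => gaussPi d α)
    hij).measureReal_preimage hmeas.nullMeasurableSet
  rw [geomGraph, map_measureReal_apply (measurable_fromRel_dotp n d t) trivial]
  calc (sampleMeasure n d α).real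
        ((fun X => SimpleGraph.fromRel fun i j => t ≤ dotp (X i) (X j)) ⁻¹' {G | G.Adj i j})
      = ((gaussPi d α).prod (gaussPi d α)).real {xy | t ≤ dotp xy.1 xy.2} := by
        rw [← hpair]
        exact congrArg (sampleMeasure n d α).real (Set.ext hadj)
    _ = p := by rw [Measure.real, ht, ENNReal.toReal_ofReal hp]

lemma map_le_volume_restrict_real_true {p : ℝ} (hp : p ∈ Set.Icc (0 : ℝ) 1) :
    ((volume.restrict (Set.Icc (0 : ℝ) 1)).map fun u => u ≤ p).real {True} = p := by
  have hset : (fun u => u ≤ p) ⁻¹' {True} ∩ Set.Icc (0 : ℝ) 1 = Set.Icc 0 p := by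
    ext u
    simp only [Set.mem_inter_iff, Set.mem_preimage, Set.mem_singleton_iff, eq_iff_iff, iff_true,
      Set.mem_Icc]
    exact ⟨fun h => ⟨h.2.1, h.1⟩, fun h => ⟨h.2, h.1, h.2.trans hp.2⟩⟩
  have hmeas : Measurable fun u : ℝ => u ≤ p := measurableSet_Iic.mem
  rw [map_measureReal_apply hmeas (MeasurableSet.singleton True),
    measureReal_restrict_apply (hmeas (MeasurableSet.singleton True)), hset,
    Real.volume_real_Icc_of_le hp.1, sub_zero]

end EdgeProbability

section Comparison

variable {d : ℕ} {α : Fin d → ℝ}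

/-- The total variation error, in terms of `x = n ^ 3 * (‖α‖₄ / ‖α‖₂) ^ 4` up to a constant factor,
of replacing `G(n, p, α)` by a random graph with independent edges. -/
def couplingError (x : ℝ) : ℝ := 4 * x + 2 * √x

lemma couplingError_mono {x y : ℝ} (h : x ≤ y) : couplingError x ≤ couplingError y := by
  unfold couplingError
  gcongr

lemma tendsto_couplingError_zero : Tendsto couplingError (nhds 0) (nhds 0) := by
  have hcont : Continuous couplingError := by unfold couplingError; fun_prop
  simpa [couplingError] using hcont.tendsto 0

lemma natCast_pow_le_pow (n : ℕ) {k m : ℕ} (hk : k ≠ 0) (h : k ≤ m) : (n : ℝ) ^ k ≤ n ^ m := by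
  obtain rfl | hn := n.eq_zero_or_pos
  · simp [hk]
  · exact_mod_cast Nat.pow_le_pow_right hn h

lemma natCast_mul_couplingError_le (n : ℕ) {x : ℝ} (hx : 0 ≤ x) :
    n * couplingError x ≤ couplingError (n ^ 3 * x) := by
  have h1 : (n : ℝ) ≤ n ^ 3 := by simpa using natCast_pow_le_pow n one_ne_zero (m := 3) (by simp)
  have h2 : (n : ℝ) ^ 2 ≤ n ^ 3 := natCast_pow_le_pow n two_ne_zero (by simp)
  calc n * couplingError x = 4 * (n * x) + 2 * √(n ^ 2 * x) := by
        rw [couplingError, sqrt_mul (sq_nonneg _), sqrt_sq n.cast_nonneg]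
        ring
    _ ≤ couplingError (n ^ 3 * x) := by
        unfold couplingError
        gcongr

lemma nrm_pow {q : ℕ} (hq : q ≠ 0) (hα : ∀ l, 0 ≤ α l) : nrm q α ^ q = ∑ l, α l ^ q := by
  rw [nrm, one_div, Real.rpow_inv_natCast_pow (Finset.sum_nonneg fun l _ => pow_nonneg (hα l) q) hq]

lemma sum_sq_pos_of_nrm_ratio_pos {c : ℝ} (h : 0 < (nrm 2 α / nrm 4 α) ^ 4 / c) :
    0 < ∑ l, α l ^ 2 := by
  refine (Finset.sum_nonneg fun l _ => sq_nonneg (α l)).lt_of_ne fun h0 => h.ne' ?_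
  simp [nrm, ← h0]

lemma tvDist_geomGraph_bernoulliGraph_le_couplingError (hα : ∀ l, 0 ≤ α l)
    (hs : 0 < ∑ l, α l ^ 2) (t : ℝ) (n : ℕ) :
    tvDist (geomGraph n d α t)
        (bernoulliGraph n ((gaussianReal 0 1).map fun x => t / √(∑ l, α l ^ 2) ≤ x))
      ≤ couplingError (n ^ 3 * (gaussianFourthMoment * (nrm 4 α / nrm 2 α) ^ 4)) := by
  have hratio : (∑ l, α l ^ 4) / (∑ l, α l ^ 2) ^ 2 = (nrm 4 α / nrm 2 α) ^ 4 := by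
    rw [← nrm_pow four_ne_zero hα, ← nrm_pow two_ne_zero hα, div_pow, ← pow_mul]
  have hg := zero_le_one.trans one_le_gaussianFourthMoment
  have hn : (n : ℝ) ^ 2 ≤ n ^ 3 := natCast_pow_le_pow n two_ne_zero (by simp)
  refine (tvDist_geomGraph_bernoulliGraph_le hα hs t n).trans ?_
  rw [hratio, ← mul_assoc (n : ℝ), ← pow_succ', couplingError]
  gcongr

/- Two vertices are joined with probability exactly `p`, so the comparison of graphs on two vertices
already bounds the error in the edge probability. -/
lemma abs_measureReal_gaussianReal_sub_le {p t : ℝ} (hα : ∀ l, 0 ≤ α l) (hs : 0 < ∑ l, α l ^ 2)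
    (hp : 0 ≤ p) (ht : IsThreshold d α p t) :
    |((gaussianReal 0 1).map fun x => t / √(∑ l, α l ^ 2) ≤ x).real {True} - p|
      ≤ couplingError (8 * (gaussianFourthMoment * (nrm 4 α / nrm 2 α) ^ 4)) := by
  set β := (gaussianReal 0 1).map fun x => t / √(∑ l, α l ^ 2) ≤ x
  have : IsProbabilityMeasure β :=
    Measure.isProbabilityMeasure_map measurableSet_Ici.mem.aemeasurable
  have hedge := (abs_measureReal_sub_le_tvDist (geomGraph 2 d α t) (bernoulliGraph 2 β)
    (s := {G | G.Adj 0 1}) trivial).trans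
      (tvDist_geomGraph_bernoulliGraph_le_couplingError hα hs t 2)
  rw [measureReal_adj_geomGraph hp ht zero_ne_one, measureReal_adj_bernoulliGraph β zero_ne_one,
    abs_sub_comm] at hedge
  norm_num at hedge
  exact hedge

theorem tvDist_erGraph_geomGraph_le {p t : ℝ} (hp : p ∈ Set.Ioo (0 : ℝ) 1) (hα : ∀ l, 0 ≤ α l)
    (hs : 0 < ∑ l, α l ^ 2) (ht : IsThreshold d α p t) (n : ℕ) :
    tvDist (erGraph n p) (geomGraph n d α t) ≤ (1 + 2 / √(p * (1 - p)))
      * couplingError (8 * gaussianFourthMoment * (n ^ 3 * (nrm 4 α / nrm 2 α) ^ 4)) := by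
  let κ := gaussianFourthMoment * (nrm 4 α / nrm 2 α) ^ 4
  have hκ : 0 ≤ κ := mul_nonneg (zero_le_one.trans one_le_gaussianFourthMoment) (by positivity)
  let β := (gaussianReal 0 1).map fun x => t / √(∑ l, α l ^ 2) ≤ x
  let β' := (volume.restrict (Set.Icc (0 : ℝ) 1)).map fun u => u ≤ p
  have : IsProbabilityMeasure (volume.restrict (Set.Icc (0 : ℝ) 1)) := ⟨by simp⟩
  have : IsProbabilityMeasure β :=
    Measure.isProbabilityMeasure_map measurableSet_Ici.mem.aemeasurable
  have : IsProbabilityMeasure β' :=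
    Measure.isProbabilityMeasure_map measurableSet_Iic.mem.aemeasurable
  have hβ' : β'.real {True} = p := map_le_volume_restrict_real_true (Set.Ioo_subset_Icc_self hp)
  have hgeom : tvDist (geomGraph n d α t) (bernoulliGraph n β) ≤ couplingError (n ^ 3 * (8 * κ)) :=
    (tvDist_geomGraph_bernoulliGraph_le_couplingError hα hs t n).trans <| couplingError_mono <|
      mul_le_mul_of_nonneg_left (by linarith) (by positivity)
  have hedge : n * |β.real {True} - p| ≤ couplingError (n ^ 3 * (8 * κ)) :=
    (mul_le_mul_of_nonneg_left (abs_measureReal_gaussianReal_sub_le hα hs hp.1.le ht)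
      n.cast_nonneg).trans (natCast_mul_couplingError_le n (by positivity))
  have hbern := tvDist_bernoulliGraph_le n β β' (by rwa [hβ'])
  rw [hβ'] at hbern
  calc tvDist (erGraph n p) (geomGraph n d α t)
      = tvDist (geomGraph n d α t) (bernoulliGraph n β') := by
        rw [tvDist_comm, erGraph_eq_bernoulliGraph]
    _ ≤ couplingError (n ^ 3 * (8 * κ)) + 2 / √(p * (1 - p)) * (n * |β.real {True} - p|) :=
        (tvDist_triangle _ (bernoulliGraph n β) _).trans (add_le_add hgeom hbern)
    _ ≤ couplingError (n ^ 3 * (8 * κ))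
          + 2 / √(p * (1 - p)) * couplingError (n ^ 3 * (8 * κ)) := by gcongr
    _ = _ := by
        rw [show (n : ℝ) ^ 3 * (8 * κ) = 8 * gaussianFourthMoment
          * (n ^ 3 * (nrm 4 α / nrm 2 α) ^ 4) by ring]
        ring

end Comparison

/-- Theorem 2(b). If `(‖α‖₂/‖α‖₄)⁴ / n³ → ∞`, then
`TV(G(n,p), G(n,p,α)) → 0`. -/
theorem tv_tendsto_zero (p : ℝ) (hp : p ∈ Set.Ioo (0 : ℝ) 1)
    (d : ℕ → ℕ) (α : (n : ℕ) → Fin (d n) → ℝ)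
    (hα : ∀ n i, 0 ≤ α n i)
    (t : ℕ → ℝ) (ht : ∀ n, IsThreshold (d n) (α n) p (t n))
    (hlim : Tendsto (fun n => (nrm 2 (α n) / nrm 4 (α n)) ^ 4 / (n : ℝ) ^ 3)
      atTop atTop) :
    Tendsto (fun n => tvDist (erGraph n p) (geomGraph n (d n) (α n) (t n)))
      atTop (nhds 0) := by
  have hinv : Tendsto (fun n : ℕ => (n : ℝ) ^ 3 * (nrm 4 (α n) / nrm 2 (α n)) ^ 4)
      atTop (nhds 0) := by
    refine hlim.inv_tendsto_atTop.congr fun n => ?_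
    rw [Pi.inv_apply, inv_div, div_eq_mul_inv, ← inv_pow, inv_div]
  have hzero : Tendsto (fun n : ℕ => 8 * gaussianFourthMoment
      * ((n : ℝ) ^ 3 * (nrm 4 (α n) / nrm 2 (α n)) ^ 4)) atTop (nhds 0) := by
    simpa using hinv.const_mul (8 * gaussianFourthMoment)
  have herror := (tendsto_couplingError_zero.comp hzero).const_mul (1 + 2 / √(p * (1 - p)))
  rw [mul_zero] at herror
  refine squeeze_zero' (.of_forall fun n => tvDist_nonneg _ _) ?_ herror
  filter_upwards [hlim.eventually_gt_atTop 0] with n hn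
  exact tvDist_erGraph_geomGraph_le hp (hα n) (sum_sq_pos_of_nrm_ratio_pos hn) (ht n) n

end
end

section
/- Let n ≥ 3 be an integer, hence for n ≥ 4: there exist constants c_n, C_n > 0 depending only on n such that for every d and every γ = (γ₁,…,γ_d) with γ_i ∈ [0,1] for all i, if ‖γ‖₂² := ∑_i γ_i² > c_n, then for every T ≥ 1 the integral I(T) = ∫_T^∞ r² / √(∏_{i=1}^d (1+γ_i² r²)) dr satisfies I(T) ≤ C_n · (1/‖γ‖₂²)^{n/2} · T^{−(n−3)}. -/
/-!
Put `S = ∑ γᵢ²`. Bernoulli's inequality, used once for exponents in `[0, 1]` and once for the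
exponent `S / p ≥ 1`, shows that `∏ (1 + γᵢ² x) ≥ (1 + x) ^ S ≥ (1 + (S / p) x) ^ p`. At `x = r²`
the integrand is therefore at most `(p / S) ^ (p / 2) * r ^ (2 - p)`, whose tail integral is
explicit when `3 < p`.
-/

open MeasureTheory Real

noncomputable section

section

variable {ι : Type*} {s : Finset ι} {p q r T : ℝ}

lemma one_add_rpow_sum_le_prod_one_add_mul {a : ι → ℝ} {x : ℝ}
    (ha : ∀ i ∈ s, a i ∈ Set.Icc (0 : ℝ) 1) (hx : -1 ≤ x) :
    (1 + x) ^ (∑ i ∈ s, a i) ≤ ∏ i ∈ s, (1 + a i * x) := by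
  have hx' : 0 ≤ 1 + x := by linarith
  rw [Real.rpow_sum_of_nonneg hx' fun i hi => (ha i hi).1]
  exact Finset.prod_le_prod (fun _ _ => by positivity)
    fun i hi => rpow_one_add_le_one_add_mul_self hx (ha i hi).1 (ha i hi).2

lemma one_add_sum_div_mul_rpow_le_prod {a : ι → ℝ} {x : ℝ}
    (ha : ∀ i ∈ s, a i ∈ Set.Icc (0 : ℝ) 1) (hp : 0 < p) (hpa : p ≤ ∑ i ∈ s, a i) (hx : 0 ≤ x) :
    (1 + (∑ i ∈ s, a i) / p * x) ^ p ≤ ∏ i ∈ s, (1 + a i * x) := by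
  have hsum : 0 ≤ ∑ i ∈ s, a i := hp.le.trans hpa
  have bernoulli : 1 + (∑ i ∈ s, a i) / p * x ≤ (1 + x) ^ ((∑ i ∈ s, a i) / p) :=
    one_add_mul_self_le_rpow_one_add (by linarith) ((one_le_div hp).2 hpa)
  calc (1 + (∑ i ∈ s, a i) / p * x) ^ p
      ≤ ((1 + x) ^ ((∑ i ∈ s, a i) / p)) ^ p := by gcongr
    _ = (1 + x) ^ (∑ i ∈ s, a i) := by
        rw [← rpow_mul (by positivity), div_mul_cancel₀ _ hp.ne']
    _ ≤ ∏ i ∈ s, (1 + a i * x) := one_add_rpow_sum_le_prod_one_add_mul ha (by linarith)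

variable {γ : ι → ℝ}

lemma rpow_mul_rpow_le_sqrt_prod (hγ : ∀ i ∈ s, |γ i| ≤ 1) (hp : 0 < p)
    (hpγ : p ≤ ∑ i ∈ s, γ i ^ 2) (hr : 0 ≤ r) :
    ((∑ i ∈ s, γ i ^ 2) / p) ^ (p / 2) * r ^ p ≤ √(∏ i ∈ s, (1 + γ i ^ 2 * r ^ 2)) := by
  have hγ_sq : ∀ i ∈ s, γ i ^ 2 ∈ Set.Icc (0 : ℝ) 1 := fun i hi =>
    ⟨sq_nonneg _, (sq_le_one_iff_abs_le_one _).2 (hγ i hi)⟩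
  have hS : 0 ≤ (∑ i ∈ s, γ i ^ 2) / p := by positivity
  refine le_sqrt_of_sq_le ?_
  calc (((∑ i ∈ s, γ i ^ 2) / p) ^ (p / 2) * r ^ p) ^ 2
      = ((∑ i ∈ s, γ i ^ 2) / p * r ^ 2) ^ p := by
        rw [mul_pow, mul_rpow hS (by positivity), ← rpow_mul_natCast hS, rpow_pow_comm hr,
          Nat.cast_ofNat, div_mul_cancel₀ _ two_ne_zero]
    _ ≤ (1 + (∑ i ∈ s, γ i ^ 2) / p * r ^ 2) ^ p := by gcongr; linarith
    _ ≤ ∏ i ∈ s, (1 + γ i ^ 2 * r ^ 2) :=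
        one_add_sum_div_mul_rpow_le_prod hγ_sq hp hpγ (sq_nonneg r)

lemma rpow_div_sqrt_prod_le (hγ : ∀ i ∈ s, |γ i| ≤ 1) (hp : 0 < p)
    (hpγ : p ≤ ∑ i ∈ s, γ i ^ 2) (hr : 0 < r) :
    r ^ q / √(∏ i ∈ s, (1 + γ i ^ 2 * r ^ 2))
      ≤ (p / ∑ i ∈ s, γ i ^ 2) ^ (p / 2) * r ^ (q - p) := by
  have hS : 0 < ∑ i ∈ s, γ i ^ 2 := hp.trans_le hpγ
  calc r ^ q / √(∏ i ∈ s, (1 + γ i ^ 2 * r ^ 2))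
      ≤ r ^ q / (((∑ i ∈ s, γ i ^ 2) / p) ^ (p / 2) * r ^ p) := by
        gcongr
        exact rpow_mul_rpow_le_sqrt_prod hγ hp hpγ hr.le
    _ = (p / ∑ i ∈ s, γ i ^ 2) ^ (p / 2) * r ^ (q - p) := by
        rw [← inv_div (∑ i ∈ s, γ i ^ 2) p, inv_rpow (by positivity), rpow_sub hr]
        field_simp

lemma integrableOn_Ioi_rpow_div_sqrt_prod (hγ : ∀ i ∈ s, |γ i| ≤ 1) (hp : 0 < p)
    (hqp : q + 1 < p) (hpγ : p ≤ ∑ i ∈ s, γ i ^ 2) (hT : 0 < T) :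
    IntegrableOn (fun r => r ^ q / √(∏ i ∈ s, (1 + γ i ^ 2 * r ^ 2))) (Set.Ioi T) := by
  have majorant_integrable :
      IntegrableOn (fun r => (p / ∑ i ∈ s, γ i ^ 2) ^ (p / 2) * r ^ (q - p)) (Set.Ioi T) :=
    (integrableOn_Ioi_rpow_of_lt (by linarith) hT).const_mul _
  refine Integrable.mono' majorant_integrable
    (Measurable.aestronglyMeasurable (by fun_prop)) ?_
  filter_upwards [ae_restrict_mem measurableSet_Ioi] with r hr
  have hr0 : 0 < r := hT.trans hr
  rw [norm_of_nonneg (by positivity)]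
  exact rpow_div_sqrt_prod_le hγ hp hpγ hr0

theorem integral_tail_bound_general (hγ : ∀ i ∈ s, |γ i| ≤ 1) (hp : 0 < p) (hqp : q + 1 < p)
    (hpγ : p ≤ ∑ i ∈ s, γ i ^ 2) (hT : 0 < T) :
    (∫ r in Set.Ioi T, r ^ q / √(∏ i ∈ s, (1 + γ i ^ 2 * r ^ 2)))
      ≤ p ^ (p / 2) / (p - (q + 1)) * (1 / ∑ i ∈ s, γ i ^ 2) ^ (p / 2)
        * (1 / T ^ (p - (q + 1))) := by
  have hS : 0 < ∑ i ∈ s, γ i ^ 2 := hp.trans_le hpγ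
  have hexp : q - p < -1 := by linarith
  have hexp_add_one : q - p + 1 = -(p - (q + 1)) := by ring
  have majorant_integrable :
      IntegrableOn (fun r => (p / ∑ i ∈ s, γ i ^ 2) ^ (p / 2) * r ^ (q - p)) (Set.Ioi T) :=
    (integrableOn_Ioi_rpow_of_lt hexp hT).const_mul _
  calc (∫ r in Set.Ioi T, r ^ q / √(∏ i ∈ s, (1 + γ i ^ 2 * r ^ 2)))
      ≤ ∫ r in Set.Ioi T, (p / ∑ i ∈ s, γ i ^ 2) ^ (p / 2) * r ^ (q - p) :=
        setIntegral_mono_on (integrableOn_Ioi_rpow_div_sqrt_prod hγ hp hqp hpγ hT)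
          majorant_integrable measurableSet_Ioi
          fun r hr => rpow_div_sqrt_prod_le hγ hp hpγ (hT.trans hr)
    _ = (p / ∑ i ∈ s, γ i ^ 2) ^ (p / 2) * (T ^ (-(p - (q + 1))) / (p - (q + 1))) := by
        rw [integral_const_mul, integral_Ioi_rpow_of_lt hexp hT, hexp_add_one, neg_div_neg_eq]
    _ = p ^ (p / 2) / (p - (q + 1)) * (1 / ∑ i ∈ s, γ i ^ 2) ^ (p / 2)
        * (1 / T ^ (p - (q + 1))) := by
        rw [div_eq_mul_one_div p, mul_rpow hp.le (by positivity), rpow_neg hT.le]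
        ring

end

/-- Lemma 2. For `n ≥ 4` there are constants `c_n, C_n > 0` such that
for every `γ` with entries in `[0,1]` and `‖γ‖₂² > c_n`, for all `T ≥ 1`,
`∫_T^∞ r²/√(∏ᵢ(1+γᵢ²r²)) dr ≤ C_n (1/‖γ‖₂²)^{n/2} T^{-(n-3)}`. -/
theorem integral_tail_bound (n : ℕ) (hn : 4 ≤ n) :
    ∃ c > (0 : ℝ), ∃ C > (0 : ℝ),
      ∀ (d : ℕ) (γ : Fin d → ℝ),
        (∀ i, γ i ∈ Set.Icc (0 : ℝ) 1) →
        (∑ i, γ i ^ 2) > c →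
        ∀ T : ℝ, 1 ≤ T →
          (∫ r in Set.Ioi T, r ^ 2 / Real.sqrt (∏ i, (1 + γ i ^ 2 * r ^ 2)))
            ≤ C * (1 / ∑ i, γ i ^ 2) ^ ((n : ℝ) / 2) * (1 / T ^ (n - 3)) := by
  have hn3 : (2 : ℝ) + 1 < n := by norm_num; exact_mod_cast hn
  have hsub : (n : ℝ) - (2 + 1) = (n - 3 : ℕ) := by rw [Nat.cast_sub (by omega)]; norm_num
  refine ⟨n, by positivity, n ^ ((n : ℝ) / 2) / (n - (2 + 1)),
    div_pos (by positivity) (sub_pos.2 hn3), fun d γ hγ hS T hT => ?_⟩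
  simpa only [rpow_two, hsub, rpow_natCast] using integral_tail_bound_general (s := .univ)
    (fun i _ => abs_le.2 ⟨by linarith [(hγ i).1], (hγ i).2⟩) (by positivity) hn3 hS.le
    (zero_lt_one.trans_le hT)

end
end

section
/- Let n ≥ 1 and let γ = (γ₁,…,γ_d) be a finite sequence of reals with γ_i ∈ [0,1] for all i and ∑_i γ_i² ≥ n. Then the elementary symmetric sum of order n of the squares satisfies ∑_{S ⊆ {1,…,d}, |S| = n} ∏_{j ∈ S} γ_j² ≥ (1/n!) ∏_{k=0}^{n−1} (‖γ‖₂² − k), where ‖γ‖₂² = ∑_{i=1}^d γ_i². -/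
open Finset

/-!
Write `σ = ∑ x i` with `0 ≤ x i ≤ 1`, and let `e m` be the `m`-th elementary symmetric sum of `x`.
Counting pairs of a set of size `m + 1` and a point in it gives
`(m + 1) * e (m + 1) = ∑_{#S = m} (∏_S x) * (σ - ∑_S x)`, and `∑_S x ≤ m`, so
`(σ - m) * e m ≤ (m + 1) * e (m + 1)`. Iterating this from `e 0 = 1` gives
`σ (σ - 1) ⋯ (σ - n + 1) ≤ n! * e n` when `n - 1 ≤ σ`. For `n - 2 ≤ σ ≤ n - 1` the left-hand side
is nonpositive.
-/

variable {ι R : Type*}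

theorem succ_mul_sum_powersetCard_succ_prod [CommSemiring R] [DecidableEq ι] (s : Finset ι)
    (x : ι → R) (m : ℕ) :
    (m + 1 : R) * ∑ T ∈ s.powersetCard (m + 1), ∏ j ∈ T, x j =
      ∑ S ∈ s.powersetCard m, (∏ j ∈ S, x j) * ∑ j ∈ s \ S, x j := by
  have count_points : (m + 1 : R) * ∑ T ∈ s.powersetCard (m + 1), ∏ j ∈ T, x j =
      ∑ T ∈ s.powersetCard (m + 1), ∑ _i ∈ T, ∏ j ∈ T, x j := by
    rw [mul_sum]
    refine sum_congr rfl fun T hT => ?_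
    rw [sum_const, (mem_powersetCard.1 hT).2, nsmul_eq_mul, Nat.cast_succ]
  simp_rw [count_points, mul_sum]
  rw [sum_sigma', sum_sigma']
  refine sum_bij' (fun p _ => ⟨p.1.erase p.2, p.2⟩) (fun p _ => ⟨insert p.2 p.1, p.2⟩)
    ?_ ?_ ?_ ?_ ?_ <;> rintro ⟨T, i⟩ h <;>
    simp only [mem_sigma, mem_powersetCard, mem_sdiff] at h ⊢
  · obtain ⟨⟨hTs, hT⟩, hi⟩ := h
    exact ⟨⟨(erase_subset i T).trans hTs, by rw [card_erase_of_mem hi, hT, Nat.add_sub_cancel]⟩,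
      hTs hi, notMem_erase i T⟩
  · obtain ⟨⟨hTs, hT⟩, his, hi⟩ := h
    exact ⟨⟨insert_subset his hTs, by rw [card_insert_of_notMem hi, hT]⟩, mem_insert_self i T⟩
  · rw [insert_erase h.2]
  · rw [erase_insert h.2.2]
  · exact (prod_erase_mul T x h.2).symm

theorem sum_powersetCard_prod_nonneg [CommSemiring R] [PartialOrder R] [IsOrderedRing R]
    {s : Finset ι} {x : ι → R} (hx : ∀ i ∈ s, 0 ≤ x i) (m : ℕ) :
    0 ≤ ∑ S ∈ s.powersetCard m, ∏ j ∈ S, x j :=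
  sum_nonneg fun _ hS => prod_nonneg fun i hi => hx i ((mem_powersetCard.1 hS).1 hi)

theorem sum_sub_mul_sum_powersetCard_prod_le [CommRing R] [PartialOrder R] [IsOrderedRing R]
    {s : Finset ι} {x : ι → R} (hx : ∀ i ∈ s, x i ∈ Set.Icc 0 1) (m : ℕ) :
    (∑ i ∈ s, x i - m) * ∑ S ∈ s.powersetCard m, ∏ j ∈ S, x j ≤
      (m + 1) * ∑ T ∈ s.powersetCard (m + 1), ∏ j ∈ T, x j := by
  classical
  rw [succ_mul_sum_powersetCard_succ_prod, mul_comm, sum_mul]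
  refine sum_le_sum fun S hS => ?_
  obtain ⟨hSs, hScard⟩ := mem_powersetCard.1 hS
  have sum_le : ∑ i ∈ S, x i ≤ m := by
    simpa [hScard] using sum_le_card_nsmul S x 1 fun i hi => (hx i (hSs hi)).2
  refine mul_le_mul_of_nonneg_left ?_ (prod_nonneg fun i hi => (hx i (hSs hi)).1)
  rw [sub_le_iff_le_add, ← sum_sdiff hSs]
  gcongr

theorem prod_range_sum_sub_le_factorial_mul_sum_powersetCard_prod [CommRing R] [LinearOrder R]
    [IsStrictOrderedRing R] {s : Finset ι} {x : ι → R} (hx : ∀ i ∈ s, x i ∈ Set.Icc 0 1) {n : ℕ}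
    (hn : (n : R) ≤ ∑ i ∈ s, x i + 2) :
    ∏ k ∈ range n, (∑ i ∈ s, x i - k) ≤
      n.factorial * ∑ S ∈ s.powersetCard n, ∏ j ∈ S, x j := by
  induction n with
  | zero => simp
  | succ m ih =>
    set σ := ∑ i ∈ s, x i
    have hm : (m : R) ≤ σ + 1 := by
      push_cast at hn
      linarith
    rw [prod_range_succ]
    rcases le_total (m : R) σ with hmσ | hσm
    · calc
        (∏ k ∈ range m, (σ - k)) * (σ - m)
            ≤ (m.factorial * ∑ S ∈ s.powersetCard m, ∏ j ∈ S, x j) * (σ - m) :=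
          mul_le_mul_of_nonneg_right (ih (by linarith)) (sub_nonneg.2 hmσ)
        _ = m.factorial * ((σ - m) * ∑ S ∈ s.powersetCard m, ∏ j ∈ S, x j) := by ring
        _ ≤ m.factorial * ((m + 1) * ∑ T ∈ s.powersetCard (m + 1), ∏ j ∈ T, x j) :=
          mul_le_mul_of_nonneg_left (sum_sub_mul_sum_powersetCard_prod_le hx m) (Nat.cast_nonneg _)
        _ = (m + 1).factorial * ∑ T ∈ s.powersetCard (m + 1), ∏ j ∈ T, x j := by
          rw [Nat.factorial_succ]
          push_cast
          ring
    · have initial_factors_nonneg : 0 ≤ ∏ k ∈ range m, (σ - k) := prod_nonneg fun k hk => by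
        have hkm : (k : R) + 1 ≤ m := mod_cast mem_range.1 hk
        linarith
      exact (mul_nonpos_of_nonneg_of_nonpos initial_factors_nonneg (sub_nonpos.2 hσm)).trans <|
        mul_nonneg (Nat.cast_nonneg _) (sum_powersetCard_prod_nonneg (fun i hi => (hx i hi).1) _)

theorem esymm_sq_lower_bound_general [Field R] [LinearOrder R] [IsStrictOrderedRing R]
    {s : Finset ι} {γ : ι → R} (hγ : ∀ i ∈ s, |γ i| ≤ 1) {n : ℕ}
    (hn : (n : R) ≤ ∑ i ∈ s, γ i ^ 2 + 2) :
    1 / (n.factorial : R) * ∏ k ∈ range n, (∑ i ∈ s, γ i ^ 2 - k) ≤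
      ∑ S ∈ s.powersetCard n, ∏ j ∈ S, γ j ^ 2 := by
  rw [one_div, inv_mul_le_iff₀ (mod_cast n.factorial_pos)]
  exact prod_range_sum_sub_le_factorial_mul_sum_powersetCard_prod
    (fun i hi => ⟨sq_nonneg (γ i), (sq_le_one_iff_abs_le_one (γ i)).2 (hγ i hi)⟩) hn

/-- inequality (8). If `γ_i ∈ [0,1]` and `∑ γ_i² ≥ n ≥ 1`, then the
elementary symmetric sum of order `n` of the `γ_i²` is at least
`(1/n!) ∏_{k=0}^{n-1} (‖γ‖₂² - k)`. -/
theorem esymm_sq_lower_bound (n : ℕ) (hn : 1 ≤ n) (d : ℕ) (γ : Fin d → ℝ)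
    (hγ : ∀ i, γ i ∈ Set.Icc (0 : ℝ) 1)
    (hsum : (n : ℝ) ≤ ∑ i, γ i ^ 2) :
    (1 / (n.factorial : ℝ)) * ∏ k ∈ Finset.range n, ((∑ i, γ i ^ 2) - (k : ℝ))
      ≤ ∑ S ∈ Finset.univ.powersetCard n, ∏ j ∈ S, γ j ^ 2 :=
  esymm_sq_lower_bound_general (fun i _ => (abs_of_nonneg (hγ i).1).trans_le (hγ i).2)
    (by linarith)
end
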